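/- arXiv:1802.06484 — 2 statements merged into one kernel-verified Lean document; each statement's English description precedes it below -/
import Mathlib

section
/- For every integer d ≥ 3 there exists a constant c_d > 0 such that for every integer k ≥ 2 there exists n₀ with the following property: every set P of n ≥ n₀ points in ℝ^d in general position contains pairwise disjoint subsets A₁, …, A_k, B₁, …, B_k, each of size at least n / k^{c_d}, such that for every choice of points a₁ ∈ A₁, …, a_k ∈ A_k and b₁ ∈ B₁, …, b_k ∈ B_k, the sets {a₁, …, a_k} and {b₁, …, b_k} are mutually avoiding. -/
noncomputable section
/-- A set of points in `ℝ^d` is in general position if no `d+1` of its points lie on a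
common hyperplane, i.e. every `d+1` of its points are affinely independent. -/
def GenPosD (d : ℕ) (P : Set (EuclideanSpace ℝ (Fin d))) : Prop :=
  ∀ s : Finset (EuclideanSpace ℝ (Fin d)), ↑s ⊆ P → s.card = d + 1 →
    AffineIndependent ℝ (fun x : s => (x : EuclideanSpace ℝ (Fin d)))

/-- `A` avoids `B` if no hyperplane spanned by `d` points of `A` meets the convex hull
of `B`. -/
def AvoidsD (d : ℕ) (A B : Set (EuclideanSpace ℝ (Fin d))) : Prop :=
  ∀ s : Finset (EuclideanSpace ℝ (Fin d)), ↑s ⊆ A → s.card = d →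
    Disjoint
      ((affineSpan ℝ (s : Set (EuclideanSpace ℝ (Fin d)))
        : AffineSubspace ℝ (EuclideanSpace ℝ (Fin d))) : Set (EuclideanSpace ℝ (Fin d)))
      (convexHull ℝ B)

def MutuallyAvoidingD (d : ℕ) (A B : Set (EuclideanSpace ℝ (Fin d))) : Prop :=
  AvoidsD d A B ∧ AvoidsD d B A


section MAHelpers
open Classical

/-- linear general position -/
def MALGP (d : ℕ) (P : Finset (Fin (d+1) → ℝ)) : Prop :=
  ∀ f : (Fin (d+1) → ℝ) →ₗ[ℝ] ℝ, f ≠ 0 → (P.filter (fun x => f x = 0)).card ≤ d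

/-- weak crossing -/
def MACrs {d : ℕ} (f : (Fin (d+1) → ℝ) →ₗ[ℝ] ℝ) (V : Finset (Fin (d+1) → ℝ)) : Prop :=
  (∃ v ∈ V, 0 ≤ f v) ∧ (∃ v ∈ V, f v ≤ 0)

lemma MALGP.mono {d : ℕ} {P Q : Finset (Fin (d+1) → ℝ)} (h : MALGP d P) (hQ : Q ⊆ P) :
    MALGP d Q := fun f hf =>
  (Finset.card_le_card (Finset.filter_subset_filter _ hQ)).trans (h f hf)

lemma ma_pos_hull {d : ℕ} (f : (Fin (d+1) → ℝ) →ₗ[ℝ] ℝ) (V : Set (Fin (d+1) → ℝ)) (e : ℝ)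
    (h : ∀ v ∈ V, e < f v) : ∀ x ∈ convexHull ℝ V, e < f x := by
  intro x hx
  have : convexHull ℝ V ⊆ {x | e < f x} :=
    convexHull_min h (convex_halfSpace_gt f.isLinear e)
  exact this hx

lemma ma_center {d : ℕ} (X : Finset (Fin (d+1) → ℝ)) : ∃ c : Fin (d+1) → ℝ,
    ∀ f : (Fin (d+1) → ℝ) →ₗ[ℝ] ℝ, f c = 0 →
      X.card ≤ (d+2) * (X.filter (fun x => 0 ≤ f x)).card := by
  rcases X.eq_empty_or_nonempty with rfl | hX
  · exact ⟨0, by simp⟩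
  have hXc : 0 < X.card := Finset.card_pos.2 hX
  have key := Convex.helly_theorem' (𝕜 := ℝ) (E := Fin (d+1) → ℝ)
    (F := fun S : Finset (Fin (d+1) → ℝ) => convexHull ℝ (S : Set (Fin (d+1) → ℝ)))
    (s := X.powerset.filter (fun S => (d+2) * (X \ S).card < X.card))
    (fun i _ => convex_convexHull ℝ _) ?_
  · obtain ⟨c, hc⟩ := key
    refine ⟨c, fun f hf => ?_⟩
    by_contra hlt
    push Not at hlt
    have hS : (X.filter (fun x => ¬ (0 ≤ f x))) ∈
        X.powerset.filter (fun S => (d+2) * (X \ S).card < X.card) := by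
      rw [Finset.mem_filter, Finset.mem_powerset]
      refine ⟨Finset.filter_subset _ _, ?_⟩
      have : X \ X.filter (fun x => ¬ (0 ≤ f x)) = X.filter (fun x => 0 ≤ f x) := by
        ext x; simp only [Finset.mem_sdiff, Finset.mem_filter]; tauto
      rw [this]; exact hlt
    have hc' := Set.mem_iInter₂.1 hc _ hS
    have := ma_pos_hull (-f) _ 0 (fun v hv => by
      simp only [Finset.coe_filter, Set.mem_ofPred_eq, not_le] at hv
      simpa using hv.2) c hc'
    simp [hf] at this
  · intro I hI hIc
    have hfr : Module.finrank ℝ (Fin (d+1) → ℝ) = d + 1 := by simp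
    rw [hfr] at hIc
    have h1 : (d+2) * (I.biUnion (fun S => X \ S)).card < (d+2) * X.card := by
      calc (d+2) * (I.biUnion (fun S => X \ S)).card
          ≤ (d+2) * ∑ S ∈ I, (X \ S).card := Nat.mul_le_mul_left _ Finset.card_biUnion_le
        _ = ∑ S ∈ I, (d+2) * (X \ S).card := Finset.mul_sum _ _ _
        _ ≤ ∑ S ∈ I, (X.card - 1) := Finset.sum_le_sum (fun S hS => by
            have := (Finset.mem_filter.1 (hI hS)).2; omega)
        _ = I.card * (X.card - 1) := by simp
        _ ≤ (d+2) * (X.card - 1) := Nat.mul_le_mul_right _ hIc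
        _ < (d+2) * X.card := Nat.mul_lt_mul_of_pos_left (by omega) (by omega)
    have h2 : (I.biUnion (fun S => X \ S)).card < X.card := lt_of_mul_lt_mul_left h1 (by omega)
    obtain ⟨x, hx, hx'⟩ := Finset.exists_mem_notMem_of_card_lt_card h2
    refine ⟨x, Set.mem_iInter₂.2 fun S hS => subset_convexHull ℝ _ ?_⟩
    by_contra hxS
    exact hx' (Finset.mem_biUnion.2 ⟨S, hS, Finset.mem_sdiff.2 ⟨hx, hxS⟩⟩)

lemma ma_ham {d : ℕ} (X : Fin (d+1) → Finset (Fin (d+1) → ℝ)) (hX : ∀ i, MALGP d (X i))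
    (σ : Fin (d+1) → ℝ) (hσ : ∀ i, σ i = 1 ∨ σ i = -1) (m : ℕ) (hm : 1 ≤ m)
    (hc : ∀ i, (d+2)^2 * m ≤ (X i).card) :
    ∃ g : (Fin (d+1) → ℝ) →ₗ[ℝ] ℝ, ∀ i, m ≤ ((X i).filter (fun x => 0 < (σ i • g) x)).card := by
  choose c hcen using fun i => ma_center (X i)
  have hlt : Submodule.span ℝ (Set.range (fun i : Fin d => c i.castSucc)) < ⊤ := by
    apply Submodule.lt_top_of_finrank_lt_finrank
    have := finrank_range_le_card (R := ℝ) (fun i : Fin d => c i.castSucc)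
    simp only [Set.finrank, Fintype.card_fin] at this
    simp only [Module.finrank_fintype_fun_eq_card, Fintype.card_fin]
    omega
  obtain ⟨f, hf0, hf⟩ := Submodule.exists_le_ker_of_lt_top _ hlt
  have hfc : ∀ i : Fin d, f (c i.castSucc) = 0 := fun i =>
    hf (Submodule.subset_span ⟨i, rfl⟩)
  -- choose sign
  have hsgn : ∃ g : (Fin (d+1) → ℝ) →ₗ[ℝ] ℝ, g ≠ 0 ∧ (∀ i : Fin d, g (c i.castSucc) = 0) ∧
      (X (Fin.last d)).card ≤ (d+2) *
        ((X (Fin.last d)).filter (fun x => 0 ≤ (σ (Fin.last d) • g) x)).card := by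
    have hcov : (X (Fin.last d)).card ≤
        ((X (Fin.last d)).filter (fun x => 0 ≤ f x)).card +
        ((X (Fin.last d)).filter (fun x => 0 ≤ (-f) x)).card := by
      refine (Finset.card_le_card ?_).trans (Finset.card_union_le _ _)
      intro x hx
      simp only [Finset.mem_union, Finset.mem_filter, hx, true_and, LinearMap.neg_apply]
      rcases le_total 0 (f x) with h | h
      · left; exact h
      · right; linarith
    have hor : (X (Fin.last d)).card ≤ (d+2) *
          ((X (Fin.last d)).filter (fun x => 0 ≤ f x)).card ∨
        (X (Fin.last d)).card ≤ (d+2) *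
          ((X (Fin.last d)).filter (fun x => 0 ≤ (-f) x)).card := by
      by_contra hcon
      push Not at hcon
      nlinarith [hcon.1, hcon.2, Nat.zero_le d]
    rcases hσ (Fin.last d) with h1 | h1 <;> rcases hor with h | h
    · exact ⟨f, hf0, hfc, by rw [h1, one_smul]; exact h⟩
    · exact ⟨-f, neg_ne_zero.2 hf0, fun i => by simp [hfc i], by rw [h1, one_smul]; exact h⟩
    · exact ⟨-f, neg_ne_zero.2 hf0, fun i => by simp [hfc i],
        by simpa [h1] using h⟩
    · exact ⟨f, hf0, hfc, by simpa [h1] using h⟩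
  obtain ⟨g, hg0, hgc, hgl⟩ := hsgn
  refine ⟨g, fun i => ?_⟩
  have hge : (X i).card ≤ (d+2) * ((X i).filter (fun x => 0 ≤ (σ i • g) x)).card := by
    induction i using Fin.lastCases with
    | last => exact hgl
    | cast i => exact hcen _ _ (by simp [hgc i])
  have hsub : ((X i).filter (fun x => 0 ≤ (σ i • g) x)).card ≤
      ((X i).filter (fun x => 0 < (σ i • g) x)).card +
      ((X i).filter (fun x => (σ i • g) x = 0)).card := by
    refine (Finset.card_le_card ?_).trans (Finset.card_union_le _ _)
    intro x hx
    simp only [Finset.mem_union, Finset.mem_filter] at hx ⊢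
    rcases hx.2.lt_or_eq with h | h
    · exact Or.inl ⟨hx.1, h⟩
    · exact Or.inr ⟨hx.1, h.symm⟩
  have hz := hX i (σ i • g) (smul_ne_zero (by rcases hσ i with h | h <;> rw [h] <;> norm_num) hg0)
  have h3 := (hc i).trans hge
  have h4 : (d+2) * ((d+2) * m) ≤ (d+2) * ((X i).filter (fun x => 0 ≤ (σ i • g) x)).card := by
    rw [← mul_assoc, ← sq]; exact h3
  have h5 := le_of_mul_le_mul_left h4 (by omega : 0 < d + 2)
  nlinarith [Nat.zero_le d]

lemma ma_cut {d : ℕ} (V Y : Finset (Fin (d+1) → ℝ))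
    (hYV : (Y : Set (Fin (d+1) → ℝ)) ⊆ convexHull ℝ (V : Set (Fin (d+1) → ℝ)))
    (g : (Fin (d+1) → ℝ) →ₗ[ℝ] ℝ) (hg : ∀ y ∈ Y, 0 < g y) :
    ∃ V' : Finset (Fin (d+1) → ℝ), V'.card ≤ V.card ^ 2 ∧
      (V' : Set (Fin (d+1) → ℝ)) ⊆ convexHull ℝ (V : Set (Fin (d+1) → ℝ)) ∧
      (∀ v ∈ V', 0 < g v) ∧
      (Y : Set (Fin (d+1) → ℝ)) ⊆ convexHull ℝ (V' : Set (Fin (d+1) → ℝ)) := by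
  rcases Y.eq_empty_or_nonempty with rfl | hY
  · exact ⟨∅, by simp⟩
  obtain ⟨y0, hy0, hmin⟩ := Y.exists_min_image g hY
  set ε := g y0 with hε
  have hεpos : 0 < ε := hg y0 hy0
  set G : (Fin (d+1) → ℝ) → ℝ := fun v => g v - ε with hG
  set Vp := V.filter (fun v => 0 ≤ G v) with hVp
  set Vm := V.filter (fun v => ¬ 0 ≤ G v) with hVm
  set e : (Fin (d+1) → ℝ) × (Fin (d+1) → ℝ) → (Fin (d+1) → ℝ) := fun p =>
    if G p.2 < 0 then (1 / (G p.1 - G p.2)) • ((-G p.2) • p.1 + (G p.1) • p.2) else p.1 with he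
  set V' := (Vp ×ˢ V).image e with hV'
  have hGe : ∀ p ∈ Vp ×ˢ V, 0 ≤ G (e p) := by
    rintro ⟨v, w⟩ hp
    rw [Finset.mem_product] at hp
    have hv := (Finset.mem_filter.1 hp.1).2
    simp only [he]
    split_ifs with hw
    · have hne : G v - G w ≠ 0 := by simp only at hw hv; linarith
      have : G ((1 / (G v - G w)) • ((-G w) • v + (G v) • w)) = 0 := by
        have h1 : g ((1 / (G v - G w)) • ((-G w) • v + (G v) • w)) =
          (1 / (G v - G w)) * ((-G w) * g v + G v * g w) := by simp; ring
        have h2 : (-G w) * g v + G v * g w = ε * (G v - G w) := by simp only [hG]; ring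
        change g _ - ε = 0
        rw [h1, h2]; field_simp; ring
      rw [this]
    · exact hv
  refine ⟨V', ?_, ?_, ?_, ?_⟩
  · refine Finset.card_image_le.trans ?_
    rw [Finset.card_product, sq]
    exact Nat.mul_le_mul_right _ (Finset.card_le_card (Finset.filter_subset _ _))
  · intro x hx
    obtain ⟨⟨v, w⟩, hp, rfl⟩ := Finset.mem_image.1 (Finset.mem_coe.1 hx)
    rw [Finset.mem_product] at hp
    have hv := (Finset.mem_filter.1 hp.1)
    have hvm : v ∈ convexHull ℝ (V : Set (Fin (d+1) → ℝ)) := subset_convexHull ℝ _ hv.1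
    simp only [he]
    split_ifs with hw
    · have hwm : w ∈ convexHull ℝ (V : Set (Fin (d+1) → ℝ)) := subset_convexHull ℝ _ hp.2
      have hpos : 0 < G v - G w := by have := hv.2; simp only at hw this; linarith
      have := (convex_convexHull ℝ (V : Set (Fin (d+1) → ℝ))) hvm hwm
        (a := (1 / (G v - G w)) * (-G w)) (b := (1 / (G v - G w)) * G v)
        (mul_nonneg (by positivity) (by linarith)) (mul_nonneg (by positivity) hv.2)
        (by field_simp; ring)
      rw [smul_add, smul_smul, smul_smul]; exact this
    · exact hvm
  · intro x hx
    obtain ⟨p, hp, rfl⟩ := Finset.mem_image.1 hx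
    have := hGe p hp
    simp only [hG] at this
    linarith
  · intro y hy
    have hyG : 0 ≤ G y := by have := hmin y hy; simp only [hG]; linarith
    obtain ⟨l, hl0, hl1, hly⟩ := Finset.mem_convexHull'.1 (hYV hy)
    set Sp := ∑ v ∈ Vp, l v * G v with hSp
    set Sm := ∑ w ∈ Vm, l w * (-G w) with hSm
    have hlp : ∀ v ∈ Vp, 0 ≤ l v := fun v hv => hl0 v (Finset.mem_filter.1 hv).1
    have hlm : ∀ v ∈ Vm, 0 ≤ l v := fun v hv => hl0 v (Finset.mem_filter.1 hv).1
    have hGp : ∀ v ∈ Vp, 0 ≤ G v := fun v hv => (Finset.mem_filter.1 hv).2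
    have hGm : ∀ v ∈ Vm, G v < 0 := fun v hv => not_le.1 (Finset.mem_filter.1 hv).2
    have hSp0 : 0 ≤ Sp := Finset.sum_nonneg fun v hv => mul_nonneg (hlp v hv) (hGp v hv)
    have hSm0 : 0 ≤ Sm := Finset.sum_nonneg fun v hv =>
      mul_nonneg (hlm v hv) (by linarith [hGm v hv])
    have hspl : ∀ F : (Fin (d+1) → ℝ) → ℝ, ∑ v ∈ Vp, F v + ∑ v ∈ Vm, F v = ∑ v ∈ V, F v :=
      fun F => Finset.sum_filter_add_sum_filter_not V (fun v => 0 ≤ G v) F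
    have hsplv : ∀ F : (Fin (d+1) → ℝ) → (Fin (d+1) → ℝ),
        ∑ v ∈ Vp, F v + ∑ v ∈ Vm, F v = ∑ v ∈ V, F v :=
      fun F => Finset.sum_filter_add_sum_filter_not V (fun v => 0 ≤ G v) F
    have hdiff : Sp - Sm = G y := by
      have h1 : Sp - Sm = ∑ v ∈ V, l v * G v := by
        rw [← hspl, hSp, hSm]; simp
      rw [h1]
      simp only [hG, mul_sub, Finset.sum_sub_distrib, ← Finset.sum_mul, hl1, one_mul]
      rw [← hly]; simp
    have hSmp : Sm ≤ Sp := by linarith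
    have hF : ∀ w ∈ Vm, Sp / Sp * l w = l w := by
      intro w hw
      rcases hSp0.eq_or_lt with h0 | h0
      · have hSmz : Sm = 0 := by linarith
        have := (Finset.sum_eq_zero_iff_of_nonneg (fun v hv =>
          mul_nonneg (hlm v hv) (by linarith [hGm v hv]))).1 hSmz w hw
        have hl : l w = 0 := by
          rcases mul_eq_zero.1 this with h | h
          · exact h
          · linarith [hGm w hw]
        simp [hl]
      · rw [div_self h0.ne', one_mul]
    have hρ : Sm / Sp ≤ 1 := div_le_one_of_le₀ hSmp hSp0
    have key := (convex_convexHull ℝ (V' : Set (Fin (d+1) → ℝ))).sum_mem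
      (t := Vp.disjSum (Vp ×ˢ Vm))
      (w := Sum.elim (fun v => l v * (1 - Sm / Sp))
        (fun p => l p.1 * l p.2 / Sp * (G p.1 - G p.2)))
      (z := Sum.elim (fun v => v) e) ?_ ?_ ?_
    · rw [Finset.sum_disjSum] at key
      simp only [Sum.elim_inl, Sum.elim_inr] at key
      convert key using 1
      have hterm : ∀ p ∈ Vp ×ˢ Vm, (l p.1 * l p.2 / Sp * (G p.1 - G p.2)) • e p =
          (l p.2 * (-G p.2) / Sp) • (l p.1 • p.1) + (l p.1 * G p.1 / Sp) • (l p.2 • p.2) := by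
        rintro ⟨v, w⟩ hp
        rw [Finset.mem_product] at hp
        have h1 := hGp v hp.1
        have h2 := hGm w hp.2
        have hne : G v - G w ≠ 0 := by linarith
        simp only [he, if_pos h2, smul_add, smul_smul]
        congr 2
        · field_simp
        · field_simp
      rw [Finset.sum_congr rfl hterm, Finset.sum_add_distrib, Finset.sum_product,
        Finset.sum_product]
      simp only
      have e1 : ∑ x ∈ Vp, ∑ w ∈ Vm, (l w * (-G w) / Sp) • (l x • x) =
          (Sm / Sp) • ∑ x ∈ Vp, l x • x := by
        rw [Finset.smul_sum]
        refine Finset.sum_congr rfl fun x _ => ?_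
        rw [← Finset.sum_smul, ← Finset.sum_div]
      have e2 : ∑ x ∈ Vp, ∑ w ∈ Vm, (l x * G x / Sp) • (l w • w) = ∑ w ∈ Vm, l w • w := by
        rw [Finset.sum_comm]
        refine Finset.sum_congr rfl fun w hw => ?_
        rw [← Finset.sum_smul, ← Finset.sum_div, smul_smul, hF w hw]
      rw [e1, e2, ← hly, ← hsplv]
      have e3 : ∑ v ∈ Vp, (l v * (1 - Sm / Sp)) • v = (1 - Sm / Sp) • ∑ v ∈ Vp, l v • v := by
        rw [Finset.smul_sum]
        refine Finset.sum_congr rfl fun x _ => ?_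
        rw [smul_smul, mul_comm]
      rw [e3, ← add_assoc, ← add_smul]; simp
    · rintro (v | p) hi
      · simp only [Finset.inl_mem_disjSum] at hi
        exact mul_nonneg (hlp v hi) (by linarith)
      · simp only [Finset.inr_mem_disjSum, Finset.mem_product] at hi
        exact mul_nonneg (div_nonneg (mul_nonneg (hlp _ hi.1) (hlm _ hi.2)) hSp0)
          (by linarith [hGp _ hi.1, hGm _ hi.2])
    · rw [Finset.sum_disjSum]
      simp only [Sum.elim_inl, Sum.elim_inr]
      have hterm : ∀ p ∈ Vp ×ˢ Vm, (l p.1 * l p.2 / Sp * (G p.1 - G p.2)) =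
          (l p.2 * (-G p.2) / Sp) * (l p.1) + (l p.1 * G p.1 / Sp) * (l p.2) := by
        intro p _; ring
      rw [Finset.sum_congr rfl hterm, Finset.sum_add_distrib, Finset.sum_product,
        Finset.sum_product]
      simp only
      have e1 : ∑ x ∈ Vp, ∑ w ∈ Vm, (l w * (-G w) / Sp) * (l x) =
          (Sm / Sp) * ∑ x ∈ Vp, l x := by
        rw [Finset.mul_sum]
        refine Finset.sum_congr rfl fun x _ => ?_
        rw [← Finset.sum_mul, ← Finset.sum_div]
      have e2 : ∑ x ∈ Vp, ∑ w ∈ Vm, (l x * G x / Sp) * (l w) = ∑ w ∈ Vm, l w := by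
        rw [Finset.sum_comm]
        refine Finset.sum_congr rfl fun w hw => ?_
        rw [← Finset.sum_mul, ← Finset.sum_div, hF w hw]
      rw [e1, e2, ← Finset.sum_mul]
      have hs := hspl l
      rw [hl1] at hs
      linear_combination hs
    · rintro (v | p) hi
      · simp only [Finset.inl_mem_disjSum] at hi
        refine subset_convexHull ℝ _ (Finset.mem_coe.2 (Finset.mem_image.2 ⟨(v, v), ?_, ?_⟩))
        · exact Finset.mem_product.2 ⟨hi, (Finset.mem_filter.1 hi).1⟩
        · simp only [he, Sum.elim_inl]
          rw [if_neg (not_lt.2 (hGp v hi))]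
      · simp only [Finset.inr_mem_disjSum, Finset.mem_product] at hi
        refine subset_convexHull ℝ _ (Finset.mem_coe.2 (Finset.mem_image.2 ⟨p, ?_, rfl⟩))
        exact Finset.mem_product.2 ⟨hi.1, (Finset.mem_filter.1 hi.2).1⟩

lemma ma_carath {d : ℕ} (V Y : Finset (Fin (d+1) → ℝ)) (hV : V.card ≤ (d+2)^2)
    (hYV : (Y : Set (Fin (d+1) → ℝ)) ⊆ convexHull ℝ (V : Set (Fin (d+1) → ℝ)))
    (m : ℕ) (hm : 2 ^ ((d+2)^2) * m ≤ Y.card) :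
    ∃ V' ⊆ V, ∃ Y' ⊆ Y, V'.card ≤ d + 2 ∧ m ≤ Y'.card ∧
      (Y' : Set (Fin (d+1) → ℝ)) ⊆ convexHull ℝ (V' : Set (Fin (d+1) → ℝ)) := by
  have h1 : ∀ y : Fin (d+1) → ℝ, ∃ T : Finset (Fin (d+1) → ℝ), y ∈ Y →
      (T ⊆ V ∧ T.card ≤ d + 2 ∧ y ∈ convexHull ℝ (T : Set (Fin (d+1) → ℝ))) := by
    intro y
    by_cases hy : y ∈ Y
    · have := hYV hy
      rw [convexHull_eq_union] at this
      simp only [Set.mem_iUnion] at this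
      obtain ⟨T, hT, hai, hyT⟩ := this
      refine ⟨T, fun _ => ⟨by exact_mod_cast hT, ?_, hyT⟩⟩
      have h2 := hai.card_le_finrank_succ
      have h3 := Submodule.finrank_le (vectorSpan ℝ (Set.range (Subtype.val : T → _)))
      simp only [Fintype.card_coe, Module.finrank_fintype_fun_eq_card, Fintype.card_fin] at h2 h3
      omega
    · exact ⟨∅, fun h => absurd h hy⟩
  choose T hT using h1
  obtain ⟨S, hS, hSm⟩ := Finset.exists_le_card_fiber_of_mul_le_card_of_maps_to
    (s := Y) (t := V.powerset) (f := T) (n := m)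
    (fun y hy => Finset.mem_powerset.2 (hT y hy).1) ⟨∅, by simp⟩ (by
      rw [Finset.card_powerset]
      exact (Nat.mul_le_mul_right _ (Nat.pow_le_pow_right (by norm_num) hV)).trans hm)
  rcases Nat.eq_zero_or_pos m with h0 | h0
  · exact ⟨∅, by simp, ∅, by simp, by simp, by simp [h0], by simp⟩
  have hne : (Y.filter (fun y => T y = S)).Nonempty := Finset.card_pos.1 (by omega)
  obtain ⟨y, hy⟩ := hne
  rw [Finset.mem_filter] at hy
  refine ⟨S, Finset.mem_powerset.1 hS, _, Finset.filter_subset _ _, ?_, hSm, ?_⟩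
  · rw [← hy.2]; exact (hT y hy.1).2.1
  · intro z hz
    have hz := Finset.mem_filter.1 (Finset.mem_coe.1 hz)
    rw [← hz.2]; exact (hT z hz.1).2.2

/-- a cell: points, hull vertices -/
def MACell (d : ℕ) (Y V : Finset (Fin (d+1) → ℝ)) : Prop :=
  V.card ≤ d + 2 ∧ (Y : Set (Fin (d+1) → ℝ)) ⊆ convexHull ℝ (V : Set (Fin (d+1) → ℝ))

def maSgn (b : Bool) : ℝ := if b then 1 else -1

lemma ma_sgn (b : Bool) : maSgn b = 1 ∨ maSgn b = -1 := by
  cases b <;> simp [maSgn]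

def maK1 (d : ℕ) : ℕ := (d+2)^2 * 2 ^ ((d+2)^2)

lemma ma_hull_trans {d : ℕ} {V V' V'' : Finset (Fin (d+1) → ℝ)}
    (h : (V' : Set (Fin (d+1) → ℝ)) ⊆ convexHull ℝ (V : Set (Fin (d+1) → ℝ)))
    (h' : (V'' : Set (Fin (d+1) → ℝ)) ⊆ convexHull ℝ (V' : Set (Fin (d+1) → ℝ))) :
    (V'' : Set (Fin (d+1) → ℝ)) ⊆ convexHull ℝ (V : Set (Fin (d+1) → ℝ)) :=
  h'.trans (convexHull_min h (convex_convexHull ℝ _))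

lemma ma_step {d : ℕ} (Y V : Fin (d+1) → Finset (Fin (d+1) → ℝ)) (hY : ∀ i, MALGP d (Y i))
    (hC : ∀ i, MACell d (Y i) (V i)) (σ : Fin (d+1) → Bool) (m : ℕ) (hm : 1 ≤ m)
    (hc : ∀ i, maK1 d * m ≤ (Y i).card) :
    ∃ Y' V' : Fin (d+1) → Finset (Fin (d+1) → ℝ), (∀ i, MACell d (Y' i) (V' i)) ∧
      (∀ i, Y' i ⊆ Y i) ∧
      (∀ i, (V' i : Set (Fin (d+1) → ℝ)) ⊆ convexHull ℝ (V i : Set (Fin (d+1) → ℝ))) ∧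
      (∀ i, m ≤ (Y' i).card) ∧
      ∃ g : (Fin (d+1) → ℝ) →ₗ[ℝ] ℝ, ∀ i, ∀ v ∈ V' i, 0 < (maSgn (σ i) • g) v := by
  obtain ⟨g, hg⟩ := ma_ham Y hY (fun i => maSgn (σ i)) (fun i => ma_sgn _)
    (2 ^ ((d+2)^2) * m) (by nlinarith [Nat.one_le_two_pow (n := (d+2)^2)]) (fun i => by
      rw [← mul_assoc]; exact hc i)
  have : ∀ i, ∃ Y' V' : Finset (Fin (d+1) → ℝ), MACell d Y' V' ∧ Y' ⊆ Y i ∧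
      (V' : Set (Fin (d+1) → ℝ)) ⊆ convexHull ℝ (V i : Set (Fin (d+1) → ℝ)) ∧
      m ≤ Y'.card ∧ ∀ v ∈ V', 0 < (maSgn (σ i) • g) v := by
    intro i
    obtain ⟨V1, h1, h2, h3, h4⟩ := ma_cut (V i)
      ((Y i).filter (fun x => 0 < (maSgn (σ i) • g) x))
      (fun x hx => (hC i).2 (Finset.mem_filter.1 hx).1)
      (maSgn (σ i) • g) (fun y hy => (Finset.mem_filter.1 hy).2)
    obtain ⟨V2, h5, Y2, h6, h7, h8, h9⟩ := ma_carath V1 _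
      (h1.trans (Nat.pow_le_pow_left (hC i).1 2)) h4 m (hg i)
    refine ⟨Y2, V2, ⟨h7, h9⟩, h6.trans (Finset.filter_subset _ _),
      (Finset.coe_subset.2 h5).trans h2, h8, fun v hv => h3 v (h5 hv)⟩
  choose Y' V' h using this
  exact ⟨Y', V', fun i => (h i).1, fun i => (h i).2.1, fun i => (h i).2.2.1,
    fun i => (h i).2.2.2.1, g, fun i => (h i).2.2.2.2⟩

lemma ma_steps {d : ℕ} (S : Finset (Fin (d+1) → Bool)) :
    ∀ (Y V : Fin (d+1) → Finset (Fin (d+1) → ℝ)), (∀ i, MALGP d (Y i)) →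
    (∀ i, MACell d (Y i) (V i)) → ∀ (m : ℕ), 1 ≤ m →
    (∀ i, maK1 d ^ S.card * m ≤ (Y i).card) →
    ∃ Y' V' : Fin (d+1) → Finset (Fin (d+1) → ℝ), (∀ i, MACell d (Y' i) (V' i)) ∧
      (∀ i, Y' i ⊆ Y i) ∧
      (∀ i, (V' i : Set (Fin (d+1) → ℝ)) ⊆ convexHull ℝ (V i : Set (Fin (d+1) → ℝ))) ∧
      (∀ i, m ≤ (Y' i).card) ∧
      ∀ σ ∈ S, ∃ g : (Fin (d+1) → ℝ) →ₗ[ℝ] ℝ, ∀ i, ∀ v ∈ V' i, 0 < (maSgn (σ i) • g) v := by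
  induction S using Finset.induction_on with
  | empty =>
    intro Y V _ hC m _ hc
    exact ⟨Y, V, hC, fun i => le_rfl, fun i => subset_convexHull ℝ _, by simpa using hc, by simp⟩
  | insert σ S hσ ih =>
    intro Y V hY hC m hm hc
    have hK : 1 ≤ maK1 d := Nat.succ_le_of_lt (by unfold maK1; positivity)
    obtain ⟨Y1, V1, a1, a2, a3, a4, a5⟩ := ih Y V hY hC (maK1 d * m) (by nlinarith) (fun i => by
      have := hc i
      rw [Finset.card_insert_of_notMem hσ, pow_succ, mul_assoc] at this
      exact this)
    obtain ⟨Y2, V2, b1, b2, b3, b4, g, b5⟩ := ma_step Y1 V1 (fun i => (hY i).mono (a2 i)) a1 σ m hm a4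
    refine ⟨Y2, V2, b1, fun i => (b2 i).trans (a2 i), fun i => ma_hull_trans (a3 i) (b3 i), b4, ?_⟩
    intro τ hτ
    rcases Finset.mem_insert.1 hτ with rfl | hτ
    · exact ⟨g, b5⟩
    · obtain ⟨g', hg'⟩ := a5 τ hτ
      exact ⟨g', fun i v hv => ma_pos_hull _ _ 0 (hg' i) v (b3 i hv)⟩

lemma ma_zero_of_crs {d : ℕ} {f : (Fin (d+1) → ℝ) →ₗ[ℝ] ℝ} {V : Finset (Fin (d+1) → ℝ)}
    (h : MACrs f V) : ∃ z ∈ convexHull ℝ (V : Set (Fin (d+1) → ℝ)), f z = 0 := by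
  obtain ⟨⟨v, hv, hv0⟩, w, hw, hw0⟩ := h
  have hc := ((convex_convexHull ℝ (V : Set (Fin (d+1) → ℝ))).linear_image f).ordConnected
  obtain ⟨z, hz, hz0⟩ := hc.out ⟨w, subset_convexHull ℝ _ hw, rfl⟩
    ⟨v, subset_convexHull ℝ _ hv, rfl⟩ (⟨hw0, hv0⟩ : (0:ℝ) ∈ Set.Icc (f w) (f v))
  exact ⟨z, hz, hz0⟩

lemma ma_crs_of_zero {d : ℕ} {f : (Fin (d+1) → ℝ) →ₗ[ℝ] ℝ} {V : Finset (Fin (d+1) → ℝ)}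
    {z : Fin (d+1) → ℝ} (hz : z ∈ convexHull ℝ (V : Set (Fin (d+1) → ℝ))) (h0 : f z = 0) :
    MACrs f V := by
  constructor
  · by_contra hcon
    push Not at hcon
    have := ma_pos_hull (-f) (V : Set _) 0 (fun v hv => by simpa using hcon v hv) z hz
    simp [h0] at this
  · by_contra hcon
    push Not at hcon
    have := ma_pos_hull f (V : Set _) 0 (fun v hv => by simpa using hcon v hv) z hz
    simp [h0] at this

lemma MACrs.mono {d : ℕ} {f : (Fin (d+1) → ℝ) →ₗ[ℝ] ℝ} {V V' : Finset (Fin (d+1) → ℝ)}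
    (h : MACrs f V')
    (hV : (V' : Set (Fin (d+1) → ℝ)) ⊆ convexHull ℝ (V : Set (Fin (d+1) → ℝ))) :
    MACrs f V := by
  obtain ⟨z, hz, h0⟩ := ma_zero_of_crs h
  exact ma_crs_of_zero (convexHull_min hV (convex_convexHull ℝ _) hz) h0

lemma ma_split {α : Type*} (Y : Finset α) (r s : ℕ) (h : r * s ≤ Y.card) :
    ∃ Z : Fin r → Finset α, (∀ i, Z i ⊆ Y) ∧ (∀ i, (Z i).card = s) ∧
      ∀ i j, i ≠ j → Disjoint (Z i) (Z j) := by
  obtain ⟨e⟩ := Function.Embedding.nonempty_of_card_le (α := Fin r × Fin s) (β := Y)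
    (by simpa using h)
  refine ⟨fun i => Finset.univ.map
    ⟨fun j => (e (i, j) : α), fun a b hab => ?_⟩, ?_, ?_, ?_⟩
  · have := e.injective (Subtype.ext hab); simpa using this
  · intro i x hx
    obtain ⟨j, _, rfl⟩ := Finset.mem_map.1 hx
    exact (e (i, j)).2
  · intro i; simp
  · intro i j hij
    rw [Finset.disjoint_left]
    intro x hx hx'
    obtain ⟨a, _, rfl⟩ := Finset.mem_map.1 hx
    obtain ⟨b, _, hb⟩ := Finset.mem_map.1 hx'
    have := e.injective (Subtype.ext hb)
    simp only [Prod.mk.injEq] at this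
    exact hij this.1.symm

def maK (d : ℕ) : ℕ := (d+1) * maK1 d ^ (2 ^ (d+1))

lemma maK_pos (d : ℕ) : 1 ≤ maK d := Nat.succ_le_of_lt (by unfold maK maK1; positivity)

lemma ma_node {d : ℕ} (Y V : Finset (Fin (d+1) → ℝ)) (hY : MALGP d Y)
    (hC : MACell d Y V) (m : ℕ) (hm : 1 ≤ m) (hc : maK d * m ≤ Y.card) :
    ∃ Y' V' : Fin (d+1) → Finset (Fin (d+1) → ℝ), (∀ i, MACell d (Y' i) (V' i)) ∧
      (∀ i, Y' i ⊆ Y) ∧ (∀ i j, i ≠ j → Disjoint (Y' i) (Y' j)) ∧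
      (∀ i, (V' i : Set (Fin (d+1) → ℝ)) ⊆ convexHull ℝ (V : Set (Fin (d+1) → ℝ))) ∧
      (∀ i, m ≤ (Y' i).card) ∧
      ∀ f : (Fin (d+1) → ℝ) →ₗ[ℝ] ℝ, f ≠ 0 → ∃ i, ¬ MACrs f (V' i) := by
  obtain ⟨Z, z1, z2, z3⟩ := ma_split Y (d+1) (maK1 d ^ (2 ^ (d+1)) * m) (by
    rw [← mul_assoc]; exact hc)
  obtain ⟨Y', V', h1, h2, h3, h4, h5⟩ := ma_steps (Finset.univ : Finset (Fin (d+1) → Bool)) Z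
    (fun _ => V) (fun i => hY.mono (z1 i))
    (fun i => ⟨hC.1, (Finset.coe_subset.2 (z1 i)).trans hC.2⟩) m hm (fun i => by
      rw [z2 i]; simp)
  refine ⟨Y', V', h1, fun i => (h2 i).trans (z1 i),
    fun i j hij => Finset.disjoint_of_subset_left (h2 i)
      (Finset.disjoint_of_subset_right (h2 j) (z3 i j hij)), h3, h4, ?_⟩
  intro f hf
  by_contra hcon
  push Not at hcon
  choose z hz hz0 using fun i => ma_zero_of_crs (hcon i)
  have hdep : ¬ LinearIndependent ℝ z := by
    intro hli
    have hspan := hli.span_eq_top_of_card_eq_finrank (by simp)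
    apply hf
    have hle : Submodule.span ℝ (Set.range z) ≤ LinearMap.ker f := by
      rw [Submodule.span_le]
      rintro _ ⟨i, rfl⟩
      exact hz0 i
    rw [hspan, top_le_iff, LinearMap.ker_eq_top] at hle
    exact hle
  obtain ⟨l, hl, i0, hi0⟩ := Fintype.not_linearIndependent_iff.1 hdep
  obtain ⟨g, hg⟩ := h5 (fun i => decide (0 ≤ l i)) (Finset.mem_univ _)
  have hgz : ∀ i, 0 < (maSgn (decide (0 ≤ l i)) • g) (z i) := fun i =>
    ma_pos_hull _ _ 0 (hg i) (z i) (hz i)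
  have hterm : ∀ i, 0 ≤ l i * g (z i) ∧ (l i ≠ 0 → 0 < l i * g (z i)) := by
    intro i
    have := hgz i
    by_cases h : 0 ≤ l i
    · simp only [h, decide_true, maSgn, if_true, one_smul] at this
      exact ⟨mul_nonneg h this.le, fun h' => mul_pos (lt_of_le_of_ne h h'.symm) this⟩
    · simp only [h, decide_false, maSgn, LinearMap.smul_apply, smul_eq_mul] at this
      have h' : l i < 0 := not_le.1 h
      have hgneg : g (z i) < 0 := by simp at this; exact this
      exact ⟨(mul_pos_of_neg_of_neg h' hgneg).le, fun _ => mul_pos_of_neg_of_neg h' hgneg⟩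
  have hsum : ∑ i, l i * g (z i) = 0 := by
    have := congrArg g hl
    simpa using this
  have : 0 < ∑ i, l i * g (z i) :=
    Finset.sum_pos' (fun i _ => (hterm i).1) ⟨i0, Finset.mem_univ _, (hterm i0).2 hi0⟩
  linarith

lemma ma_tree {d : ℕ} (t : ℕ) : ∀ (Y V : Finset (Fin (d+1) → ℝ)), MALGP d Y →
    MACell d Y V → ∀ (m : ℕ), 1 ≤ m → maK d ^ t * m ≤ Y.card →
    ∃ Y' V' : (Fin t → Fin (d+1)) → Finset (Fin (d+1) → ℝ), (∀ i, MACell d (Y' i) (V' i)) ∧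
      (∀ i, Y' i ⊆ Y) ∧ (∀ i j, i ≠ j → Disjoint (Y' i) (Y' j)) ∧
      (∀ i, (V' i : Set (Fin (d+1) → ℝ)) ⊆ convexHull ℝ (V : Set (Fin (d+1) → ℝ))) ∧
      (∀ i, m ≤ (Y' i).card) ∧
      ∀ f : (Fin (d+1) → ℝ) →ₗ[ℝ] ℝ, f ≠ 0 →
        (Finset.univ.filter (fun i => MACrs f (V' i))).card ≤ d ^ t := by
  induction t with
  | zero =>
    intro Y V hY hC m hm hc
    refine ⟨fun _ => Y, fun _ => V, fun _ => hC, fun _ => le_rfl, fun i j hij =>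
      absurd (Subsingleton.elim i j) hij, fun _ => subset_convexHull ℝ _, fun _ => by simpa using hc,
      fun f _ => ?_⟩
    refine (Finset.card_le_univ _).trans ?_
    simp
  | succ t ih =>
    intro Y V hY hC m hm hc
    have hK := maK_pos d
    obtain ⟨Y1, V1, a1, a2, a3, a4, a5, a6⟩ := ma_node Y V hY hC (maK d ^ t * m)
      (Nat.succ_le_of_lt (by positivity)) (by
        rw [← mul_assoc, ← pow_succ']; exact hc)
    choose Y2 V2 b1 b2 b3 b4 b5 b6 using fun i =>
      ih (Y1 i) (V1 i) (hY.mono (a2 i)) (a1 i) m hm (a5 i)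
    refine ⟨fun p => Y2 (p 0) (Fin.tail p), fun p => V2 (p 0) (Fin.tail p), fun p => b1 _ _,
      fun p => (b2 _ _).trans (a2 _), ?_, fun p => ma_hull_trans (a4 _) (b4 _ _),
      fun p => b5 _ _, ?_⟩
    · intro p q hpq
      by_cases h0 : p 0 = q 0
      · have ht : Fin.tail p ≠ Fin.tail q := by
          intro h
          apply hpq
          rw [← Fin.cons_self_tail p, ← Fin.cons_self_tail q, h0, h]
        simp only [h0]
        exact b3 _ _ _ ht
      · exact Finset.disjoint_of_subset_left (b2 _ _)
          (Finset.disjoint_of_subset_right (b2 _ _) (a3 _ _ h0))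
    · intro f hf
      obtain ⟨i0, hi0⟩ := a6 f hf
      have hsub : (Finset.univ.filter (fun p : Fin (t+1) → Fin (d+1) =>
          MACrs f (V2 (p 0) (Fin.tail p)))) ⊆
          ((Finset.univ.erase i0).biUnion (fun i =>
            (Finset.univ.filter (fun q => MACrs f (V2 i q))).image
              (fun q => (Fin.cons i q : Fin (t+1) → Fin (d+1))))) := by
        intro p hp
        have hp := (Finset.mem_filter.1 hp).2
        rw [Finset.mem_biUnion]
        refine ⟨p 0, Finset.mem_erase.2 ⟨?_, Finset.mem_univ _⟩, ?_⟩
        · intro h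
          apply hi0
          rw [← h]
          exact hp.mono (b4 _ _)
        · exact Finset.mem_image.2 ⟨Fin.tail p, Finset.mem_filter.2 ⟨Finset.mem_univ _, hp⟩,
            Fin.cons_self_tail p⟩
      refine (Finset.card_le_card hsub).trans (Finset.card_biUnion_le.trans ?_)
      calc _ ≤ ∑ i ∈ Finset.univ.erase i0, d ^ t :=
            Finset.sum_le_sum fun i _ => Finset.card_image_le.trans (b6 i f hf)
        _ = d ^ (t+1) := by
            rw [Finset.sum_const, Finset.card_erase_of_mem (Finset.mem_univ _)]
            simp [pow_succ, mul_comm]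

open scoped Pointwise in
lemma ma_bound {d : ℕ} (X : Finset (Fin (d+1) → ℝ)) : ∃ V, MACell d X V := by
  obtain ⟨b, hb, -⟩ := exists_mem_interior_convexHull_affineBasis
    (E := Fin (d+1) → ℝ) (s := Set.univ) (x := 0) Filter.univ_mem
  obtain ⟨R, hR⟩ := X.finite_toSet.isBounded.subset_ball 0
  obtain ⟨r, hr, hball⟩ := Metric.mem_nhds_iff.1 (mem_interior_iff_mem_nhds.1 hb)
  set s : ℝ := (max R 1) / r
  have hs : 0 < s := div_pos (lt_max_of_lt_right one_pos) hr
  refine ⟨Finset.univ.image (fun i => s • b i), ?_, ?_⟩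
  · refine Finset.card_image_le.trans ?_
    simp
  · intro x hx
    have hx' : s⁻¹ • x ∈ convexHull ℝ (Set.range b) := by
      apply hball
      rw [mem_ball_zero_iff, norm_smul, norm_inv, Real.norm_of_nonneg hs.le]
      have := hR hx
      rw [mem_ball_zero_iff] at this
      have h2 : ‖x‖ < max R 1 := lt_max_of_lt_left this
      rw [inv_mul_lt_iff₀ hs]
      simp only [s]
      rwa [div_mul_cancel₀ _ hr.ne']
    have h3 : x ∈ s • convexHull ℝ (Set.range b) := by
      refine ⟨s⁻¹ • x, hx', ?_⟩
      simp [smul_smul, hs.ne']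
    rw [← convexHull_smul] at h3
    convert h3 using 2
    ext y
    simp [Set.mem_smul_set]

lemma ma_free {ι : Type*} [Fintype ι] (q m B : ℕ) (Fb : (Fin q → ι) → Finset ι)
    (hB : ∀ τ, (Fb τ).card ≤ B) (h : m ^ (q+1) * B < Fintype.card ι) :
    ∃ φ : Fin m → ι, ∀ (x : Fin m) (e : Fin q → Fin m), (∀ j, e j ≠ x) → φ x ∉ Fb (φ ∘ e) := by
  by_contra hcon
  push Not at hcon
  set N := Fintype.card ι with hN
  have hNpos : 0 < N := by omega
  set S : Fin m × (Fin q → Fin m) → Finset (Fin m → ι) := fun p =>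
    Finset.univ.filter (fun φ => (∀ j, p.2 j ≠ p.1) ∧ φ p.1 ∈ Fb (φ ∘ p.2)) with hS
  have hcard : ∀ p, (S p).card * N ≤ N ^ m * B := by
    rintro ⟨x, e⟩
    have h1 : ((S (x, e)) ×ˢ (Finset.univ : Finset ι)).card ≤
        ((Finset.univ : Finset (Fin m → ι)).sigma (fun ψ => Fb (ψ ∘ e))).card := by
      apply Finset.card_le_card_of_injOn
        (fun p => (⟨Function.update p.1 x p.2, p.1 x⟩ : Σ _ : Fin m → ι, ι))
      · rintro ⟨φ, y⟩ hp
        have hp := (Finset.mem_filter.1 (Finset.mem_product.1 (Finset.mem_coe.1 hp)).1).2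
        simp only at hp
        rw [Finset.mem_coe, Finset.mem_sigma]
        refine ⟨Finset.mem_univ _, ?_⟩
        have : (Function.update φ x y) ∘ e = φ ∘ e := by
          funext j
          simp [Function.update_of_ne (hp.1 j)]
        simp only [this]
        exact hp.2
      · rintro ⟨φ, y⟩ _ ⟨φ', y'⟩ _ heq
        simp only [Sigma.mk.injEq, heq_eq_eq] at heq
        obtain ⟨h1, h2⟩ := heq
        have hy : y = y' := by
          have := congrFun h1 x
          simpa using this
        have hφ : φ = φ' := by
          funext z
          by_cases hz : z = x
          · rw [hz]; exact h2
          · have := congrFun h1 z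
            simpa [Function.update_of_ne hz] using this
        rw [hy, hφ]
    rw [Finset.card_product, Finset.card_univ, Finset.card_sigma] at h1
    refine h1.trans ?_
    calc ∑ ψ : Fin m → ι, (Fb (ψ ∘ e)).card ≤ ∑ _ψ : Fin m → ι, B :=
          Finset.sum_le_sum fun ψ _ => hB _
      _ = N ^ m * B := by simp [hN]
  have hcov : (Finset.univ : Finset (Fin m → ι)) ⊆ Finset.univ.biUnion S := by
    intro φ _
    obtain ⟨x, e, h1, h2⟩ := hcon φ
    exact Finset.mem_biUnion.2 ⟨(x, e), Finset.mem_univ _,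
      Finset.mem_filter.2 ⟨Finset.mem_univ _, h1, h2⟩⟩
  have h2 : N ^ m ≤ ∑ p, (S p).card := by
    have := (Finset.card_le_card hcov).trans Finset.card_biUnion_le
    simpa [hN] using this
  have h3 : N ^ m * N ≤ N ^ m * (m ^ (q+1) * B) := by
    calc N ^ m * N ≤ (∑ p, (S p).card) * N := Nat.mul_le_mul_right _ h2
      _ = ∑ p, (S p).card * N := Finset.sum_mul _ _ _
      _ ≤ ∑ _p : Fin m × (Fin q → Fin m), N ^ m * B := Finset.sum_le_sum fun p _ => hcard p
      _ = N ^ m * (m ^ (q+1) * B) := by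
        simp [pow_succ]; ring
  have := le_of_mul_le_mul_left h3 (by positivity)
  omega

lemma ma_move {d : ℕ} (W : Finset (Fin (d+1) → ℝ)) (f g : (Fin (d+1) → ℝ) →ₗ[ℝ] ℝ)
    (hfg : ∀ w ∈ W, f w = 0 → g w = 0) (hg : ∃ w ∈ W, g w ≠ 0) :
    ∃ s : ℝ, (∀ w ∈ W, (0 ≤ f w → 0 ≤ (f + s • g) w) ∧ (f w ≤ 0 → (f + s • g) w ≤ 0)) ∧
      ∃ w ∈ W, f w ≠ 0 ∧ (f + s • g) w = 0 := by
  obtain ⟨w1, hw1, hgw1⟩ := hg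
  obtain ⟨w0, hw0, hmin⟩ := (W.filter (fun w => g w ≠ 0)).exists_min_image
    (fun w => |f w / g w|) ⟨w1, Finset.mem_filter.2 ⟨hw1, hgw1⟩⟩
  rw [Finset.mem_filter] at hw0
  refine ⟨-(f w0 / g w0), ?_, w0, hw0.1, fun h => hw0.2 (hfg _ hw0.1 h), ?_⟩
  · intro w hw
    simp only [LinearMap.add_apply, LinearMap.smul_apply, smul_eq_mul]
    by_cases hgw : g w = 0
    · simp [hgw]
    · have h1 := hmin w (Finset.mem_filter.2 ⟨hw, hgw⟩)
      have h2 : |(f w0 / g w0) * g w| ≤ |f w| := by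
        rw [abs_mul]
        calc |f w0 / g w0| * |g w| ≤ |f w / g w| * |g w| :=
              mul_le_mul_of_nonneg_right h1 (abs_nonneg _)
          _ = |f w| := by rw [← abs_mul, div_mul_cancel₀ _ hgw]
      constructor
      · intro h
        rw [abs_of_nonneg h] at h2
        linarith [le_abs_self ((f w0 / g w0) * g w)]
      · intro h
        rw [abs_of_nonpos h] at h2
        linarith [neg_abs_le ((f w0 / g w0) * g w)]
  · simp only [LinearMap.add_apply, LinearMap.smul_apply, smul_eq_mul]
    rw [neg_mul, div_mul_cancel₀ _ hw0.2]; ring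

lemma ma_canon {d : ℕ} {J : Type*} [Fintype J] (V : J → Finset (Fin (d+1) → ℝ))
    (hspan : ∀ g : (Fin (d+1) → ℝ) →ₗ[ℝ] ℝ, (∀ j, ∀ w ∈ V j, g w = 0) → g = 0)
    (f : (Fin (d+1) → ℝ) →ₗ[ℝ] ℝ) (hf0 : f ≠ 0) (hf : ∀ j, MACrs f (V j)) :
    ∃ f' : (Fin (d+1) → ℝ) →ₗ[ℝ] ℝ, f' ≠ 0 ∧ (∀ j, MACrs f' (V j)) ∧
      ∀ g : (Fin (d+1) → ℝ) →ₗ[ℝ] ℝ, (∀ j, ∀ w ∈ V j, f' w = 0 → g w = 0) →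
        ∃ c : ℝ, g = c • f' := by
  set W := Finset.univ.biUnion V with hW
  have hmem : ∀ {j w}, w ∈ V j → w ∈ W := fun {j w} h =>
    Finset.mem_biUnion.2 ⟨j, Finset.mem_univ _, h⟩
  -- maximal zero count
  have hmax : ∃ f' : (Fin (d+1) → ℝ) →ₗ[ℝ] ℝ, (f' ≠ 0 ∧ (∀ j, MACrs f' (V j))) ∧
      ∀ f'' : (Fin (d+1) → ℝ) →ₗ[ℝ] ℝ, (f'' ≠ 0 ∧ (∀ j, MACrs f'' (V j))) →
        (W.filter (fun w => f'' w = 0)).card ≤ (W.filter (fun w => f' w = 0)).card := by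
    set A : Set ℕ := {n | ∃ f' : (Fin (d+1) → ℝ) →ₗ[ℝ] ℝ, (f' ≠ 0 ∧ (∀ j, MACrs f' (V j))) ∧
      (W.filter (fun w => f' w = 0)).card = n} with hA
    have hAne : A.Nonempty := ⟨_, f, ⟨hf0, hf⟩, rfl⟩
    have hAb : BddAbove A := ⟨W.card, by
      rintro n ⟨f', _, rfl⟩
      exact Finset.card_le_card (Finset.filter_subset _ _)⟩
    obtain ⟨f', h1, h2⟩ := Nat.sSup_mem hAne hAb
    refine ⟨f', h1, fun f'' h'' => ?_⟩
    rw [h2]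
    exact le_csSup hAb ⟨f'', h'', rfl⟩
  obtain ⟨f', ⟨h0, hcr⟩, hm⟩ := hmax
  refine ⟨f', h0, hcr, fun g hg => ?_⟩
  by_contra hno
  push Not at hno
  have hg0 : g ≠ 0 := fun h => hno 0 (by simp [h])
  have hgw : ∃ w ∈ W, g w ≠ 0 := by
    by_contra hcon
    push Not at hcon
    exact hg0 (hspan g fun j w hw => hcon w (hmem hw))
  have hfg : ∀ w ∈ W, f' w = 0 → g w = 0 := by
    intro w hw
    obtain ⟨j, _, hj⟩ := Finset.mem_biUnion.1 hw
    exact hg j w hj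
  obtain ⟨s, hs, w0, hw0, hw1, hw2⟩ := ma_move W f' g hfg hgw
  have hne : f' + s • g ≠ 0 := by
    intro h
    by_cases hs0 : s = 0
    · apply h0; simpa [hs0] using h
    · apply hno (-(1/s))
      refine LinearMap.ext fun x => ?_
      have h3 : f' x + s * g x = 0 := by
        have := congrArg (fun F : (Fin (d+1) → ℝ) →ₗ[ℝ] ℝ => F x) h
        simpa using this
      simp only [LinearMap.smul_apply, smul_eq_mul]
      field_simp
      linarith
  have hcr' : ∀ j, MACrs (f' + s • g) (V j) := by
    intro j
    obtain ⟨⟨v, hv, hv0⟩, w, hw, hw0⟩ := hcr j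
    exact ⟨⟨v, hv, (hs v (hmem hv)).1 hv0⟩, w, hw, (hs w (hmem hw)).2 hw0⟩
  have hle := hm _ ⟨hne, hcr'⟩
  have hlt : (W.filter (fun w => f' w = 0)).card < (W.filter (fun w => (f' + s • g) w = 0)).card := by
    apply Finset.card_lt_card
    refine ⟨fun w hw => ?_, fun hsub => ?_⟩
    · rw [Finset.mem_filter] at hw ⊢
      refine ⟨hw.1, ?_⟩
      simp [hw.2, hfg w hw.1 hw.2]
    · exact hw1 (Finset.mem_filter.1 (hsub (Finset.mem_filter.2 ⟨hw0, hw2⟩))).2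
  omega

/-- chosen nonzero functional vanishing on `Z` (if any) -/
def maF {d : ℕ} (Z : Finset (Fin (d+1) → ℝ)) : (Fin (d+1) → ℝ) →ₗ[ℝ] ℝ :=
  if h : ∃ g : (Fin (d+1) → ℝ) →ₗ[ℝ] ℝ, g ≠ 0 ∧ ∀ z ∈ Z, g z = 0 then h.choose else 0

lemma maF_spec {d : ℕ} {Z : Finset (Fin (d+1) → ℝ)}
    (h : ∃ g : (Fin (d+1) → ℝ) →ₗ[ℝ] ℝ, g ≠ 0 ∧ ∀ z ∈ Z, g z = 0) :
    maF Z ≠ 0 ∧ ∀ z ∈ Z, maF Z z = 0 := by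
  unfold maF; rw [dif_pos h]; exact h.choose_spec

lemma MACrs.smul {d : ℕ} {f : (Fin (d+1) → ℝ) →ₗ[ℝ] ℝ} {V : Finset (Fin (d+1) → ℝ)}
    (h : MACrs f V) (c : ℝ) : MACrs (c • f) V := by
  obtain ⟨z, hz, h0⟩ := ma_zero_of_crs h
  exact ma_crs_of_zero hz (by simp [h0])

lemma ma_canon2 {d : ℕ} (V : Fin (d+1) → Finset (Fin (d+1) → ℝ))
    (hspan : ∀ g : (Fin (d+1) → ℝ) →ₗ[ℝ] ℝ, (∀ j, ∀ w ∈ V j, g w = 0) → g = 0)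
    (f : (Fin (d+1) → ℝ) →ₗ[ℝ] ℝ) (hf0 : f ≠ 0) (hf : ∀ j, MACrs f (V j)) :
    ∃ i0 : Fin (d+1), ∃ Z ⊆ Finset.univ.biUnion (fun j : Fin d => V (i0.succAbove j)),
      maF Z ≠ 0 ∧ MACrs (maF Z) (V i0) := by
  obtain ⟨f', h0, hcr, huniq⟩ := ma_canon V hspan f hf0 hf
  set Z := (Finset.univ.biUnion V).filter (fun w => f' w = 0) with hZ
  obtain ⟨b, hbZ, hbs, hbl⟩ := exists_linearIndependent ℝ (Z : Set (Fin (d+1) → ℝ))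
  have hbfin : b.Finite := Z.finite_toSet.subset hbZ
  set Z0 := hbfin.toFinset with hZ0
  have hZ0Z : Z0 ⊆ Z := by
    intro z hz; exact hbZ (hbfin.mem_toFinset.1 hz)
  have hcard : Z0.card ≤ d := by
    have h1 : Z0.card = Module.finrank ℝ (Submodule.span ℝ b) := by
      have := hbfin.fintype
      rw [finrank_span_set_eq_card hbl, hZ0]
      simp
    have h2 : Submodule.span ℝ b < ⊤ := by
      rw [lt_top_iff_ne_top]
      intro htop
      apply h0
      have hle : Submodule.span ℝ b ≤ LinearMap.ker f' := by
        rw [Submodule.span_le]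
        intro z hz
        exact (Finset.mem_filter.1 (hbZ hz)).2
      rw [htop, top_le_iff, LinearMap.ker_eq_top] at hle
      exact hle
    have h3 := Submodule.finrank_lt h2.ne
    simp only [Module.finrank_fintype_fun_eq_card, Fintype.card_fin] at h3
    omega
  have hidx : ∀ z : Fin (d+1) → ℝ, ∃ j : Fin (d+1), z ∈ Z0 → z ∈ V j := by
    intro z
    by_cases hz : z ∈ Z0
    · obtain ⟨j, _, hj⟩ := Finset.mem_biUnion.1 (Finset.mem_filter.1 (hZ0Z hz)).1
      exact ⟨j, fun _ => hj⟩
    · exact ⟨0, fun h => absurd h hz⟩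
  choose idx hidx using hidx
  have himg : (Z0.image idx).card < (Finset.univ : Finset (Fin (d+1))).card := by
    have := Finset.card_image_le (s := Z0) (f := idx)
    simp only [Finset.card_univ, Fintype.card_fin]; omega
  obtain ⟨i0, _, hi0⟩ := Finset.exists_mem_notMem_of_card_lt_card himg
  have hspec := maF_spec (Z := Z0) ⟨f', h0, fun z hz => (Finset.mem_filter.1 (hZ0Z hz)).2⟩
  refine ⟨i0, Z0, ?_, hspec.1, ?_⟩
  · intro z hz
    have hne : idx z ≠ i0 := fun h => hi0 (Finset.mem_image.2 ⟨z, hz, h⟩)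
    obtain ⟨j, hj⟩ := Fin.exists_succAbove_eq hne
    exact Finset.mem_biUnion.2 ⟨j, Finset.mem_univ _, by rw [hj]; exact hidx z hz⟩
  · obtain ⟨c, hc⟩ := huniq (maF Z0) (fun j w hw hw0 => by
      have hle : Submodule.span ℝ b ≤ LinearMap.ker (maF Z0) := by
        rw [Submodule.span_le]
        intro z hz
        exact hspec.2 z (hbfin.mem_toFinset.2 hz)
      rw [hbs] at hle
      exact hle (Submodule.subset_span (Finset.mem_coe.2 (Finset.mem_filter.2
        ⟨Finset.mem_biUnion.2 ⟨j, Finset.mem_univ _, hw⟩, hw0⟩))))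
    rw [hc]
    exact (hcr i0).smul c

lemma ma_det {d : ℕ} (V : Fin (d+1) → Finset (Fin (d+1) → ℝ))
    (hnb : ∀ f : (Fin (d+1) → ℝ) →ₗ[ℝ] ℝ, f ≠ 0 → ∃ i, ¬ MACrs f (V i))
    (y y' : Fin (d+1) → (Fin (d+1) → ℝ))
    (hy : ∀ i, y i ∈ convexHull ℝ (V i : Set (Fin (d+1) → ℝ)))
    (hy' : ∀ i, y' i ∈ convexHull ℝ (V i : Set (Fin (d+1) → ℝ))) :
    0 < (Matrix.of y).det * (Matrix.of y').det := by
  set S : Set (Fin (d+1) → (Fin (d+1) → ℝ)) :=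
    Set.pi Set.univ (fun i => convexHull ℝ (V i : Set (Fin (d+1) → ℝ))) with hS
  have hne : ∀ z ∈ S, (Matrix.of z).det ≠ 0 := by
    intro z hz h0
    obtain ⟨v, hv0, hv⟩ := Matrix.exists_mulVec_eq_zero_iff.2 h0
    obtain ⟨i, hi⟩ := hnb (Fintype.linearCombination ℝ v) (by
      intro h
      apply hv0
      funext j
      have := congrArg (fun F : (Fin (d+1) → ℝ) →ₗ[ℝ] ℝ => F (Pi.single j 1)) h
      simpa [Fintype.linearCombination_apply, Pi.single_apply] using this)
    apply hi
    apply ma_crs_of_zero (hz i (Set.mem_univ _))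
    have := congrFun hv i
    simpa [Matrix.mulVec, dotProduct, Fintype.linearCombination_apply] using this
  have hcont : Continuous (fun z : Fin (d+1) → (Fin (d+1) → ℝ) => (Matrix.of z).det) :=
    Continuous.matrix_det continuous_id
  have hconv : Convex ℝ S := convex_pi fun i _ => convex_convexHull ℝ _
  have hpre := hconv.isPreconnected
  have hyS : y ∈ S := fun i _ => hy i
  have hyS' : y' ∈ S := fun i _ => hy' i
  have key : ∀ a ∈ S, ∀ b ∈ S, (Matrix.of a).det < 0 → 0 < (Matrix.of b).det → False := by
    intro a ha b hb h1 h2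
    obtain ⟨z, hz, hz0⟩ := hpre.intermediate_value ha hb hcont.continuousOn ⟨h1.le, h2.le⟩
    exact hne z hz hz0
  rcases (hne y hyS).lt_or_gt with h1 | h1 <;> rcases (hne y' hyS').lt_or_gt with h2 | h2
  · exact mul_pos_of_neg_of_neg h1 h2
  · exact (key _ hyS _ hyS' h1 h2).elim
  · exact (key _ hyS' _ hyS h2 h1).elim
  · exact mul_pos h1 h2

lemma ma_family {d : ℕ} (hd : 1 ≤ d) (P : Finset (Fin (d+1) → ℝ)) (hP : MALGP d P) (t m M : ℕ)
    (hm : d + 1 ≤ m) (hc : maK d ^ t * m ≤ P.card)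
    (hM : M ^ (d+1) * (2 ^ (d * (d+2)) * d ^ t + d) < (d+1) ^ t) :
    ∃ Y V : Fin M → Finset (Fin (d+1) → ℝ), (∀ i, MACell d (Y i) (V i)) ∧
      (∀ i, Y i ⊆ P) ∧ (∀ i j, i ≠ j → Disjoint (Y i) (Y j)) ∧
      (∀ i, m ≤ (Y i).card) ∧
      ∀ p : Fin (d+1) → Fin M, Function.Injective p →
        ∀ f : (Fin (d+1) → ℝ) →ₗ[ℝ] ℝ, f ≠ 0 → ∃ i, ¬ MACrs f (V (p i)) := by
  obtain ⟨V0, hV0⟩ := ma_bound P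
  obtain ⟨Y, V, h1, h2, h3, -, h5, h6⟩ := ma_tree t P V0 hP hV0 m (by omega) hc
  set Fb : (Fin d → (Fin t → Fin (d+1))) → Finset (Fin t → Fin (d+1)) := fun τ =>
    ((Finset.univ.biUnion (fun j => V (τ j))).powerset.filter (fun Z => maF Z ≠ 0)).biUnion
      (fun Z => Finset.univ.filter (fun i => MACrs (maF Z) (V i))) ∪ Finset.univ.image τ with hFb
  have hFc : ∀ τ, (Fb τ).card ≤ 2 ^ (d * (d+2)) * d ^ t + d := by
    intro τ
    refine (Finset.card_union_le _ _).trans (Nat.add_le_add ?_ ?_)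
    · refine (Finset.card_biUnion_le_card_mul _ _ (d ^ t) ?_).trans (Nat.mul_le_mul_right _ ?_)
      · intro Z hZ
        exact h6 _ (Finset.mem_filter.1 hZ).2
      · refine (Finset.card_le_card (Finset.filter_subset _ _)).trans ?_
        rw [Finset.card_powerset]
        refine Nat.pow_le_pow_right (by norm_num) ?_
        refine (Finset.card_biUnion_le_card_mul _ _ (d+2) ?_).trans ?_
        · intro j _; exact (h1 _).1
        · simp
    · refine Finset.card_image_le.trans ?_
      simp
  obtain ⟨φ, hφ⟩ := ma_free d M _ Fb hFc (by simpa using hM)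
  have hinj : Function.Injective φ := by
    intro x y hxy
    by_contra hne
    apply hφ x (fun _ => y) (fun _ h => hne h.symm)
    refine Finset.mem_union_right _ (Finset.mem_image.2 ⟨⟨0, hd⟩, Finset.mem_univ _, ?_⟩)
    simp [hxy]
  refine ⟨Y ∘ φ, V ∘ φ, fun i => h1 _, fun i => h2 _, fun i j hij => h3 _ _ (hinj.ne hij),
    fun i => h5 _, ?_⟩
  intro p hp f hf
  by_contra hcon
  push Not at hcon
  obtain ⟨i0, Z, hZ, hZ0, hZc⟩ := ma_canon2 (fun i => V (φ (p i))) (fun g hg => by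
    by_contra hg0
    have hle := (hP.mono (h2 (φ (p 0)))) g hg0
    have hall : (Y (φ (p 0))).filter (fun x => g x = 0) = Y (φ (p 0)) := by
      rw [Finset.filter_true_of_mem]
      intro x hx
      have hx' := (h1 (φ (p 0))).2 hx
      have hsub : convexHull ℝ (V (φ (p 0)) : Set (Fin (d+1) → ℝ)) ⊆ LinearMap.ker g :=
        convexHull_min (fun v hv => hg 0 v hv) (LinearMap.ker g).convex
      exact hsub hx'
    rw [hall] at hle
    have := h5 (φ (p 0))
    omega) f hf hcon
  apply hφ (p i0) (fun j => p (i0.succAbove j)) (fun j h => Fin.succAbove_ne _ _ (hp h))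
  refine Finset.mem_union_left _ (Finset.mem_biUnion.2 ⟨Z, Finset.mem_filter.2
    ⟨Finset.mem_powerset.2 hZ, hZ0⟩, Finset.mem_filter.2 ⟨Finset.mem_univ _, hZc⟩⟩)

lemma ma_avoid {d : ℕ} (Q : Finset (Fin (d+1) → ℝ)) (hQ : MALGP d Q) (t k : ℕ)
    (hk : 1 ≤ k) (hc : maK d ^ t * k ≤ Q.card)
    (hM : 4 * (k ^ d * d ^ t + 1) < (d+1) ^ t) :
    ∃ A B : Finset (Fin (d+1) → ℝ), A ⊆ Q ∧ B ⊆ Q ∧ Disjoint A B ∧ A.card = k ∧ B.card = k ∧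
      (∀ Z ⊆ A, Z.card = d → ∀ h : (Fin (d+1) → ℝ) →ₗ[ℝ] ℝ, (∀ z ∈ Z, h z = 0) →
        ∀ b ∈ B, ∀ b' ∈ B, 0 ≤ h b * h b') ∧
      (∀ Z ⊆ B, Z.card = d → ∀ h : (Fin (d+1) → ℝ) →ₗ[ℝ] ℝ, (∀ z ∈ Z, h z = 0) →
        ∀ b ∈ A, ∀ b' ∈ A, 0 ≤ h b * h b') := by
  obtain ⟨V0, hV0⟩ := ma_bound Q
  obtain ⟨Y, V, h1, h2, h3, -, h5, h6⟩ := ma_tree t Q V0 hQ hV0 k hk hc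
  choose A hAY hAk using fun i => Finset.exists_subset_card_eq (h5 i)
  have hF : ∀ Z : Finset (Fin (d+1) → ℝ), Z.card = d → maF Z ≠ 0 ∧ ∀ z ∈ Z, maF Z z = 0 := by
    intro Z hZ
    apply maF_spec
    have hlt : Submodule.span ℝ (Z : Set (Fin (d+1) → ℝ)) < ⊤ := by
      apply Submodule.lt_top_of_finrank_lt_finrank
      have := finrank_span_finset_le_card (R := ℝ) Z
      simp only [Set.finrank] at this
      simp only [Module.finrank_fintype_fun_eq_card, Fintype.card_fin]
      omega
    obtain ⟨f, hf0, hf⟩ := Submodule.exists_le_ker_of_lt_top _ hlt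
    exact ⟨f, hf0, fun z hz => hf (Submodule.subset_span hz)⟩
  set Fb : (Fin 1 → (Fin t → Fin (d+1))) → Finset (Fin t → Fin (d+1)) := fun τ =>
    ((A (τ 0)).powersetCard d).biUnion
      (fun Z => Finset.univ.filter (fun i => MACrs (maF Z) (V i))) ∪ {τ 0} with hFb
  have hFc : ∀ τ, (Fb τ).card ≤ k ^ d * d ^ t + 1 := by
    intro τ
    refine (Finset.card_union_le _ _).trans (Nat.add_le_add ?_ (by simp))
    refine (Finset.card_biUnion_le_card_mul _ _ (d ^ t) ?_).trans (Nat.mul_le_mul_right _ ?_)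
    · intro Z hZ
      exact h6 _ (hF Z (Finset.mem_powersetCard.1 hZ).2).1
    · rw [Finset.card_powersetCard, hAk]
      exact Nat.choose_le_pow k d
  obtain ⟨φ, hφ⟩ := ma_free 1 2 _ Fb hFc (by simpa using hM)
  have h01 := hφ 0 (fun _ => 1) (by simp)
  have h10 := hφ 1 (fun _ => 0) (by simp)
  have hne : φ 0 ≠ φ 1 := by
    intro h
    apply h01
    exact Finset.mem_union_right _ (by simp [h])
  have main : ∀ x y : Fin 2, φ y ∉ Fb (φ ∘ fun _ => x) →
      (∀ Z ⊆ A (φ x), Z.card = d → ∀ h : (Fin (d+1) → ℝ) →ₗ[ℝ] ℝ, (∀ z ∈ Z, h z = 0) →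
        ∀ b ∈ A (φ y), ∀ b' ∈ A (φ y), 0 ≤ h b * h b') := by
    intro x y hxy Z hZ hZd h hh b hb b' hb'
    have hncr : ¬ MACrs (maF Z) (V (φ y)) := by
      intro hcr
      apply hxy
      exact Finset.mem_union_left _ (Finset.mem_biUnion.2 ⟨Z, Finset.mem_powersetCard.2
        ⟨hZ, hZd⟩, Finset.mem_filter.2 ⟨Finset.mem_univ _, hcr⟩⟩)
    have hb1 := (h1 (φ y)).2 (hAY _ hb)
    have hb2 := (h1 (φ y)).2 (hAY _ hb')
    have hpos : 0 < maF Z b * maF Z b' := by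
      unfold MACrs at hncr
      rw [not_and_or] at hncr
      push Not at hncr
      rcases hncr with hc | hc
      · have e1 := ma_pos_hull (-maF Z) _ 0 (fun v hv => by simpa using hc v hv) b hb1
        have e2 := ma_pos_hull (-maF Z) _ 0 (fun v hv => by simpa using hc v hv) b' hb2
        simp only [LinearMap.neg_apply] at e1 e2
        nlinarith
      · exact mul_pos (ma_pos_hull (maF Z) _ 0 hc b hb1) (ma_pos_hull (maF Z) _ 0 hc b' hb2)
    have hFb0 : maF Z b ≠ 0 := fun h0 => by simp [h0] at hpos
    have hu : h - (h b / maF Z b) • maF Z = 0 := by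
      by_contra hu0
      have hle := hQ _ hu0
      have hsub : insert b Z ⊆ Q.filter (fun x => (h - (h b / maF Z b) • maF Z) x = 0) := by
        intro z hz
        rcases Finset.mem_insert.1 hz with rfl | hz
        · refine Finset.mem_filter.2 ⟨h2 _ (hAY _ hb), ?_⟩
          simp [hFb0]
        · refine Finset.mem_filter.2 ⟨h2 _ (hAY _ (hZ hz)), ?_⟩
          simp [hh z hz, (hF Z hZd).2 z hz]
      have hbZ : b ∉ Z := fun hb => hFb0 ((hF Z hZd).2 b hb)
      have := Finset.card_le_card hsub
      rw [Finset.card_insert_of_notMem hbZ] at this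
      omega
    have hval : ∀ z, h z = (h b / maF Z b) * maF Z z := by
      intro z
      have := congrArg (fun F : (Fin (d+1) → ℝ) →ₗ[ℝ] ℝ => F z) hu
      simp at this
      linarith
    have e3 := hval b
    have e4 := hval b'
    rw [e3, e4]
    have : (h b / maF Z b * maF Z b) * (h b / maF Z b * maF Z b') =
      (h b / maF Z b)^2 * (maF Z b * maF Z b') := by ring
    rw [this]
    positivity
  exact ⟨A (φ 0), A (φ 1), (hAY _).trans (h2 _), (hAY _).trans (h2 _),
    Finset.disjoint_of_subset_left (hAY _) (Finset.disjoint_of_subset_right (hAY _) (h3 _ _ hne)),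
    hAk _, hAk _, main 0 1 h10, main 1 0 h01⟩


def maH {d : ℕ} (u : Fin d → (Fin (d+1) → ℝ)) : (Fin (d+1) → ℝ) →ₗ[ℝ] ℝ :=
  (Matrix.detRowAlternating (n := Fin (d+1)) (R := ℝ)).toMultilinearMap.toLinearMap
    (Fin.cons (0 : Fin (d+1) → ℝ) u) 0

lemma maH_apply {d : ℕ} (u : Fin d → (Fin (d+1) → ℝ)) (y : Fin (d+1) → ℝ) :
    maH u y = (Matrix.of (Fin.cons y u : Fin (d+1) → (Fin (d+1) → ℝ))).det := by
  unfold maH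
  rw [MultilinearMap.toLinearMap_apply, Fin.update_cons_zero]
  rfl

lemma maH_zero {d : ℕ} (u : Fin d → (Fin (d+1) → ℝ)) (j : Fin d) : maH u (u j) = 0 := by
  rw [maH_apply]
  apply Matrix.det_zero_of_row_eq (i := 0) (j := j.succ) (Fin.succ_ne_zero j).symm
  show (Fin.cons (u j) u : Fin (d+1) → (Fin (d+1) → ℝ)) 0 = (Fin.cons (u j) u : Fin (d+1) → (Fin (d+1) → ℝ)) j.succ
  simp

lemma ma_side {d k M : ℕ} (Y V : Fin M → Finset (Fin (d+1) → ℝ))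
    (hcell : ∀ i, MACell d (Y i) (V i))
    (hnb : ∀ p : Fin (d+1) → Fin M, Function.Injective p →
      ∀ f : (Fin (d+1) → ℝ) →ₗ[ℝ] ℝ, f ≠ 0 → ∃ i, ¬ MACrs f (V (p i)))
    (q : Fin M → (Fin (d+1) → ℝ)) (hq : ∀ i, q i ∈ Y i)
    (x x' : Fin k → Fin M) (hx : Function.Injective x) (hxx : ∀ i j, x i ≠ x' j)
    (hs : ∀ e : Fin d → Fin k, Function.Injective e →
      ∀ h : (Fin (d+1) → ℝ) →ₗ[ℝ] ℝ, (∀ j, h (q (x (e j))) = 0) →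
        ∀ i j, 0 ≤ h (q (x' i)) * h (q (x' j)))
    (a b : Fin k → (Fin (d+1) → ℝ)) (ha : ∀ i, a i ∈ Y (x i)) (hb : ∀ i, b i ∈ Y (x' i))
    (e : Fin d → Fin k) (he : Function.Injective e) :
    ∃ h : (Fin (d+1) → ℝ) →ₗ[ℝ] ℝ, (∀ j, h (a (e j)) = 0) ∧ ∀ i, 0 < h (b i) := by
  have key : ∀ i, 0 < maH (fun j => a (e j)) (b i) * maH (fun j => q (x (e j))) (q (x' i)) := by
    intro i
    rw [maH_apply, maH_apply]
    refine ma_det (fun l => V ((Fin.cons (x' i) (fun j => x (e j)) : Fin (d+1) → Fin M) l))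
      (hnb _ ?_) _ _ ?_ ?_
    · rw [Fin.cons_injective_iff]
      refine ⟨?_, hx.comp he⟩
      rintro ⟨j, hj⟩
      exact hxx _ _ hj
    · intro l
      refine Fin.cases ?_ (fun j => ?_) l
      · exact (hcell _).2 (hb i)
      · exact (hcell _).2 (ha (e j))
    · intro l
      refine Fin.cases ?_ (fun j => ?_) l
      · exact (hcell _).2 (hq _)
      · exact (hcell _).2 (hq _)
  have hsq := hs e he (maH (fun j => q (x (e j)))) (fun j => maH_zero (fun j => q (x (e j))) j)
  rcases Nat.eq_zero_or_pos k with rfl | hk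
  · exact ⟨0, by simp, fun i => i.elim0⟩
  set i0 : Fin k := ⟨0, hk⟩
  refine ⟨(maH (fun j => a (e j)) (b i0)) • maH (fun j => a (e j)), fun j => ?_, fun i => ?_⟩
  · rw [LinearMap.smul_apply, maH_zero (fun j => a (e j)) j, smul_zero]
  · rw [LinearMap.smul_apply, smul_eq_mul]
    have h1 := key i0
    have h2 := key i
    have h3 := hsq i0 i
    set A0 := maH (fun j => a (e j)) (b i0)
    set A1 := maH (fun j => a (e j)) (b i)
    set Q0 := maH (fun j => q (x (e j))) (q (x' i0))
    set Q1 := maH (fun j => q (x (e j))) (q (x' i))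
    have h4 : 0 < (A0 * A1) * (Q0 * Q1) := by
      have := mul_pos h1 h2
      linarith [mul_mul_mul_comm A0 Q0 A1 Q1]
    by_contra hneg
    exact absurd h4 (not_lt.2 (mul_nonpos_of_nonpos_of_nonneg (not_lt.1 hneg) h3))

lemma ma_combine {d : ℕ} (hd : 1 ≤ d) (P : Finset (Fin (d+1) → ℝ)) (hP : MALGP d P)
    (t m M t' k : ℕ) (hk : 1 ≤ k)
    (hm : d + 1 ≤ m) (hc : maK d ^ t * m ≤ P.card)
    (hM : M ^ (d+1) * (2 ^ (d * (d+2)) * d ^ t + d) < (d+1) ^ t)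
    (hc' : maK d ^ t' * k ≤ M)
    (hM' : 4 * (k ^ d * d ^ t' + 1) < (d+1) ^ t') :
    ∃ A B : Fin k → Finset (Fin (d+1) → ℝ),
      (∀ i, A i ⊆ P) ∧ (∀ i, B i ⊆ P) ∧
      (∀ i j, i ≠ j → Disjoint (A i) (A j)) ∧
      (∀ i j, i ≠ j → Disjoint (B i) (B j)) ∧
      (∀ i j, Disjoint (A i) (B j)) ∧
      (∀ i, m ≤ (A i).card) ∧ (∀ i, m ≤ (B i).card) ∧
      (∀ a b : Fin k → (Fin (d+1) → ℝ), (∀ i, a i ∈ A i) → (∀ i, b i ∈ B i) →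
        ∀ e : Fin d → Fin k, Function.Injective e →
          (∃ h : (Fin (d+1) → ℝ) →ₗ[ℝ] ℝ, (∀ j, h (a (e j)) = 0) ∧ ∀ i, 0 < h (b i)) ∧
          (∃ h : (Fin (d+1) → ℝ) →ₗ[ℝ] ℝ, (∀ j, h (b (e j)) = 0) ∧ ∀ i, 0 < h (a i))) := by
  obtain ⟨Y, V, hcell, hYP, hYd, hYm, hnb⟩ := ma_family hd P hP t m M hm hc hM
  have hne : ∀ i, ∃ q, q ∈ Y i := fun i => Finset.card_pos.1 (by have := hYm i; omega)
  choose q hq using hne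
  have hqi : Function.Injective q := by
    intro i j hij
    by_contra h
    exact Finset.disjoint_left.1 (hYd i j h) (hq i) (hij ▸ hq j)
  have hQP : Finset.univ.image q ⊆ P := by
    intro z hz
    obtain ⟨i, _, rfl⟩ := Finset.mem_image.1 hz
    exact hYP i (hq i)
  have hQc : (Finset.univ.image q).card = M := by
    rw [Finset.card_image_of_injective _ hqi]; simp
  obtain ⟨A, B, hAQ, hBQ, hAB, hAk, hBk, hA, hB⟩ :=
    ma_avoid _ (hP.mono hQP) t' k hk (by rw [hQc]; exact hc') hM'
  have enum : ∀ S : Finset (Fin (d+1) → ℝ), S ⊆ Finset.univ.image q → S.card = k →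
      ∃ x : Fin k → Fin M, Function.Injective x ∧ ∀ i, q (x i) ∈ S := by
    intro S hS hSk
    have hh : ∀ i : Fin k, ∃ z, q z = ((S.equivFinOfCardEq hSk).symm i : Fin (d+1) → ℝ) := by
      intro i
      obtain ⟨z, _, hz⟩ := Finset.mem_image.1 (hS ((S.equivFinOfCardEq hSk).symm i).2)
      exact ⟨z, hz⟩
    choose x hx using hh
    refine ⟨x, fun i j hij => ?_, fun i => ?_⟩
    · have := hx i
      rw [hij, hx j] at this
      exact ((S.equivFinOfCardEq hSk).symm.injective (Subtype.ext this)).symm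
    · rw [hx]; exact Subtype.property _
  obtain ⟨x, hxi, hxA⟩ := enum A hAQ hAk
  obtain ⟨x', hxi', hxB⟩ := enum B hBQ hBk
  have hxx : ∀ i j, x i ≠ x' j := by
    intro i j h
    exact Finset.disjoint_left.1 hAB (hxA i) (h ▸ hxB j)
  have tr : ∀ (A B : Finset (Fin (d+1) → ℝ)) (x x' : Fin k → Fin M), Function.Injective x →
      (∀ i, q (x i) ∈ A) → (∀ i, q (x' i) ∈ B) →
      (∀ Z ⊆ A, Z.card = d → ∀ h : (Fin (d+1) → ℝ) →ₗ[ℝ] ℝ, (∀ z ∈ Z, h z = 0) →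
        ∀ b ∈ B, ∀ b' ∈ B, 0 ≤ h b * h b') →
      (∀ e : Fin d → Fin k, Function.Injective e →
      ∀ h : (Fin (d+1) → ℝ) →ₗ[ℝ] ℝ, (∀ j, h (q (x (e j))) = 0) →
        ∀ i j, 0 ≤ h (q (x' i)) * h (q (x' j))) := by
    intro A B x x' hxi hxA hxB hA e he h hh i j
    refine hA (Finset.univ.image (fun j => q (x (e j)))) ?_ ?_ h ?_ _ (hxB i) _ (hxB j)
    · intro z hz
      obtain ⟨j, _, rfl⟩ := Finset.mem_image.1 hz
      exact hxA _
    · exact (Finset.card_image_of_injective _ (hqi.comp (hxi.comp he))).trans (by simp)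
    · intro z hz
      obtain ⟨j, _, rfl⟩ := Finset.mem_image.1 hz
      exact hh j
  refine ⟨fun i => Y (x i), fun i => Y (x' i), fun i => hYP _, fun i => hYP _,
    fun i j h => hYd _ _ (hxi.ne h), fun i j h => hYd _ _ (hxi'.ne h),
    fun i j => hYd _ _ (hxx i j), fun i => hYm _, fun i => hYm _, ?_⟩
  intro a b ha hb e he
  exact ⟨ma_side Y V hcell hnb q hq x x' hxi hxx (tr A B x x' hxi hxA hxB hA) a b ha hb e he,
    ma_side Y V hcell hnb q hq x' x hxi' (fun i j h => hxx j i h.symm)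
      (tr B A x' x hxi' hxB hxA hB) b a hb ha e he⟩


lemma ma_pow_dom (d : ℕ) (hd : 1 ≤ d) (C : ℕ) : ∃ a : ℕ, C * d ^ a < (d+1) ^ a := by
  have hd0 : (0:ℝ) < d := by exact_mod_cast hd
  obtain ⟨a, ha⟩ := pow_unbounded_of_one_lt (C : ℝ) (y := ((d:ℝ)+1)/d)
    (by rw [lt_div_iff₀ hd0]; linarith)
  refine ⟨a, ?_⟩
  rw [div_pow, lt_div_iff₀ (by positivity)] at ha
  exact_mod_cast ha

lemma ma_params (d : ℕ) (hd : 1 ≤ d) : ∃ c : ℕ, 1 ≤ c ∧ ∀ k : ℕ, 2 ≤ k → ∃ t t' M : ℕ,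
    M ^ (d+1) * (2 ^ (d * (d+2)) * d ^ t + d) < (d+1) ^ t ∧
    maK d ^ t' * k ≤ M ∧
    4 * (k ^ d * d ^ t' + 1) < (d+1) ^ t' ∧ 2 * maK d ^ t ≤ k ^ c := by
  obtain ⟨a, ha⟩ := ma_pow_dom d hd (8 * 2 ^ d)
  set K := maK d with hK
  have hK1 : 1 ≤ K := maK_pos d
  set C2 := (2 * K ^ a) ^ (d+1) * (2 ^ (d * (d+2)) + d) with hC2
  obtain ⟨b, hb⟩ := ma_pow_dom d hd C2
  set e := 2 * K ^ b with he
  have hKb : 0 < K ^ b := by positivity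
  refine ⟨2 * e, by omega, fun k hk => ?_⟩
  set L := Nat.log 2 k + 1 with hL
  have hkL : k < 2 ^ L := Nat.lt_pow_succ_log_self (by norm_num) k
  have hLk : 2 ^ L ≤ k ^ 2 := by
    have := Nat.pow_log_le_self 2 (show k ≠ 0 by omega)
    rw [hL, pow_succ, sq]
    exact Nat.mul_le_mul this hk
  have hL0 : L ≠ 0 := by omega
  have hL1 : 1 ≤ L := by omega
  refine ⟨b * L, a * L, (2 * K ^ a) ^ L, ?_, ?_, ?_, ?_⟩
  · have h1 : 2 ^ (d * (d+2)) * d ^ (b * L) + d ≤ (2 ^ (d * (d+2)) + d) * d ^ (b*L) := by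
      have : 1 ≤ d ^ (b*L) := Nat.one_le_pow _ _ hd
      nlinarith
    have h2 : (2 ^ (d * (d+2)) + d) ≤ (2 ^ (d * (d+2)) + d) ^ L := Nat.le_self_pow hL0 _
    calc ((2 * K ^ a) ^ L) ^ (d+1) * (2 ^ (d * (d+2)) * d ^ (b * L) + d)
        ≤ ((2 * K ^ a) ^ L) ^ (d+1) * ((2 ^ (d * (d+2)) + d) ^ L * d ^ (b*L)) :=
          Nat.mul_le_mul_left _ (h1.trans (Nat.mul_le_mul_right _ h2))
      _ = (C2 * d ^ b) ^ L := by
          rw [hC2]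
          generalize 2 ^ (d * (d+2)) + d = X
          generalize 2 * K ^ a = Z
          rw [mul_pow, mul_pow, ← pow_mul d, ← pow_mul Z, ← pow_mul Z, mul_comm L (d+1), mul_assoc]
      _ < ((d+1) ^ b) ^ L := Nat.pow_lt_pow_left hb hL0
      _ = (d+1) ^ (b * L) := by rw [← pow_mul]
  · rw [mul_pow, ← pow_mul, mul_comm]
    exact Nat.mul_le_mul_right _ hkL.le
  · have h1 : 1 ≤ k ^ d * d ^ (a*L) :=
      Nat.mul_pos (Nat.pow_pos (by omega)) (Nat.pow_pos hd)
    have h8 : 8 ≤ 8 ^ L := Nat.le_self_pow hL0 _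
    calc 4 * (k ^ d * d ^ (a*L) + 1) ≤ 8 * (k ^ d * d ^ (a*L)) := by omega
      _ ≤ 8 ^ L * ((2 ^ L) ^ d * d ^ (a*L)) :=
          Nat.mul_le_mul h8 (Nat.mul_le_mul_right _ (Nat.pow_le_pow_left hkL.le d))
      _ = (8 * 2 ^ d * d ^ a) ^ L := by
          rw [mul_pow, mul_pow, ← pow_mul d, ← pow_mul 2, ← pow_mul 2, mul_comm L d, mul_assoc]
      _ < ((d+1) ^ a) ^ L := Nat.pow_lt_pow_left ha hL0
      _ = (d+1) ^ (a * L) := by rw [← pow_mul]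
  · calc 2 * K ^ (b*L) ≤ 2 ^ L * (K ^ b) ^ L := by
          rw [pow_mul]; exact Nat.mul_le_mul_right _ (Nat.le_self_pow hL0 _)
      _ = e ^ L := by rw [he, mul_pow]
      _ ≤ (2 ^ e) ^ L := Nat.pow_le_pow_left Nat.lt_two_pow_self.le _
      _ = (2 ^ L) ^ e := by rw [← pow_mul, ← pow_mul, mul_comm]
      _ ≤ (k ^ 2) ^ e := Nat.pow_le_pow_left hLk _
      _ = k ^ (2 * e) := by rw [← pow_mul]

def maLift (d : ℕ) : EuclideanSpace ℝ (Fin d) →ᵃ[ℝ] (Fin (d+1) → ℝ) where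
  toFun x := Fin.cons 1 (fun i => x i)
  linear :=
    { toFun := fun x => Fin.cons 0 (fun i => x i)
      map_add' := by
        intro x y
        ext i
        refine Fin.cases ?_ (fun j => ?_) i <;> simp
      map_smul' := by
        intro c x
        ext i
        refine Fin.cases ?_ (fun j => ?_) i <;> simp }
  map_vadd' := by
    intro p v
    ext i
    refine Fin.cases ?_ (fun j => ?_) i <;> simp

lemma maLift_apply (d : ℕ) (x : EuclideanSpace ℝ (Fin d)) :
    maLift d x = Fin.cons 1 (fun i => x i) := rfl

lemma maLift_inj (d : ℕ) : Function.Injective (maLift d) := by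
  intro x y h
  ext i
  have := congrFun h i.succ
  simpa [maLift_apply] using this

lemma ma_span_zero {d : ℕ} (f : (Fin (d+1) → ℝ) →ₗ[ℝ] ℝ) (s : Set (EuclideanSpace ℝ (Fin d)))
    (hs : ∀ x ∈ s, f (maLift d x) = 0) : ∀ x ∈ affineSpan ℝ s, f (maLift d x) = 0 := by
  have h : affineSpan ℝ s ≤ (affineSpan ℝ {(0:ℝ)}).comap (f.toAffineMap.comp (maLift d)) := by
    rw [affineSpan_le]
    intro x hx
    simp [hs x hx]
  intro x hx
  have := h hx
  simpa using this

lemma ma_hull_pos {d : ℕ} (f : (Fin (d+1) → ℝ) →ₗ[ℝ] ℝ) (s : Set (EuclideanSpace ℝ (Fin d)))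
    (hs : ∀ x ∈ s, 0 < f (maLift d x)) : ∀ x ∈ convexHull ℝ s, 0 < f (maLift d x) := by
  intro x hx
  have h : convexHull ℝ s ⊆ (f.toAffineMap.comp (maLift d)) ⁻¹' (Set.Ioi 0) :=
    convexHull_min (fun y hy => hs y hy) ((convex_Ioi 0).affine_preimage _)
  exact h hx

lemma ma_lgp {d : ℕ} (P : Finset (EuclideanSpace ℝ (Fin d)))
    (hP : GenPosD d (P : Set (EuclideanSpace ℝ (Fin d)))) :
    MALGP d (P.image (maLift d)) := by
  intro f hf
  by_contra hcon
  push Not at hcon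
  have h1 : d + 1 ≤ (P.filter (fun x => f (maLift d x) = 0)).card := by
    rw [Finset.filter_image, Finset.card_image_of_injective _ (maLift_inj d)] at hcon
    exact hcon
  obtain ⟨T, hT, hTc⟩ := Finset.exists_subset_card_eq h1
  have hai := hP T (fun x hx => (Finset.mem_filter.1 (hT hx)).1) hTc
  have htop := (hai.affineSpan_eq_top_iff_card_eq_finrank_add_one).2 (by simp [hTc])
  have hz := ma_span_zero f (Set.range (fun x : T => (x : EuclideanSpace ℝ (Fin d)))) (by
    rintro _ ⟨x, rfl⟩
    exact (Finset.mem_filter.1 (hT x.2)).2)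
  rw [htop] at hz
  apply hf
  ext1 i
  have hz0 := hz 0 (by trivial)
  refine LinearMap.ext fun c => ?_
  have : ∀ w : Fin (d+1) → ℝ, f w = 0 := by
    intro w
    have hzv := hz (WithLp.toLp 2 (fun i => w i.succ)) (by trivial)
    have hw : w = (w 0 - 1) • maLift d 0 + maLift d (WithLp.toLp 2 (fun i => w i.succ)) := by
      ext i
      refine Fin.cases ?_ (fun j => ?_) i <;> simp [maLift_apply]
    rw [hw, map_add, map_smul, hz0, hzv]
    simp
  simp [this]

lemma ma_avoidsD {d k : ℕ} (a b : Fin k → EuclideanSpace ℝ (Fin d))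
    (H : ∀ e : Fin d → Fin k, Function.Injective e →
      ∃ h : (Fin (d+1) → ℝ) →ₗ[ℝ] ℝ, (∀ j, h (maLift d (a (e j))) = 0) ∧
        ∀ i, 0 < h (maLift d (b i))) :
    AvoidsD d (Set.range a) (Set.range b) := by
  intro s hs hsd
  have hh : ∀ j : Fin d, ∃ i, a i = ((s.equivFinOfCardEq hsd).symm j : EuclideanSpace ℝ (Fin d)) :=
    fun j => hs ((s.equivFinOfCardEq hsd).symm j).2
  choose e he using hh
  obtain ⟨h, h0, hpos⟩ := H e (by
    intro i j hij
    have := he i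
    rw [hij, he j] at this
    exact ((s.equivFinOfCardEq hsd).symm.injective (Subtype.ext this)).symm)
  rw [Set.disjoint_left]
  intro x hx hx'
  have e1 := ma_span_zero h _ (by
    intro y hy
    have := h0 (s.equivFinOfCardEq hsd ⟨y, hy⟩)
    rw [he] at this
    simpa using this) x hx
  have e2 := ma_hull_pos h _ (by
    rintro _ ⟨i, rfl⟩
    exact hpos i) x hx'
  linarith

lemma ma_final (d : ℕ) (hd : 1 ≤ d) :
    ∃ c : ℝ, 0 < c ∧
      ∀ k : ℕ, 2 ≤ k → ∃ n₀ : ℕ,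
        ∀ (P : Finset (EuclideanSpace ℝ (Fin d))) (n : ℕ), P.card = n → n₀ ≤ n →
          GenPosD d (P : Set (EuclideanSpace ℝ (Fin d))) →
          ∃ A B : Fin k → Finset (EuclideanSpace ℝ (Fin d)),
            (∀ i, A i ⊆ P) ∧ (∀ i, B i ⊆ P) ∧
            (∀ i j, i ≠ j → Disjoint (A i) (A j)) ∧
            (∀ i j, i ≠ j → Disjoint (B i) (B j)) ∧
            (∀ i j, Disjoint (A i) (B j)) ∧
            (∀ i, (n : ℝ) / (k : ℝ) ^ c ≤ (A i).card) ∧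
            (∀ i, (n : ℝ) / (k : ℝ) ^ c ≤ (B i).card) ∧
            (∀ a b : Fin k → EuclideanSpace ℝ (Fin d),
              (∀ i, a i ∈ A i) → (∀ i, b i ∈ B i) →
              MutuallyAvoidingD d (Set.range a) (Set.range b)) := by
  obtain ⟨c, hc1, hc⟩ := ma_params d hd
  refine ⟨c, by exact_mod_cast hc1, fun k hk => ?_⟩
  obtain ⟨t, t', M, hM, hc', hM', hkc⟩ := hc k hk
  have hK1 : 1 ≤ maK d ^ t := Nat.one_le_pow _ _ (maK_pos d)
  refine ⟨maK d ^ t * (d+1), fun P n hPn hn hP => ?_⟩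
  set m := n / maK d ^ t with hm
  have hmd : d + 1 ≤ m := by
    rw [hm, Nat.le_div_iff_mul_le hK1, mul_comm]; exact hn
  have hmn : maK d ^ t * m ≤ n := Nat.mul_div_le _ _
  have hnm : n ≤ 2 * maK d ^ t * m := by
    have h1 := Nat.lt_mul_div_succ n hK1
    rw [← hm] at h1
    nlinarith
  have hnk : n ≤ k ^ c * m := hnm.trans (Nat.mul_le_mul_right _ hkc)
  have hreal : ∀ x : ℕ, m ≤ x → (n : ℝ) / (k : ℝ) ^ (c : ℝ) ≤ x := by
    intro x hx
    have hk0 : (0:ℝ) < k := by exact_mod_cast (by omega : 0 < k)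
    rw [Real.rpow_natCast, div_le_iff₀ (by positivity)]
    have h2 : n ≤ x * k ^ c := by
      rw [mul_comm]; exact hnk.trans (Nat.mul_le_mul_left _ hx)
    exact_mod_cast h2
  obtain ⟨A, B, hA, hB, hAA, hBB, hAB, hAm, hBm, hav⟩ :=
    ma_combine hd _ (ma_lgp P hP) t m M t' k (by omega) hmd
      (by rw [Finset.card_image_of_injective _ (maLift_inj d), hPn]; exact hmn) hM hc' hM'
  have hdisj : ∀ X Y : Finset (Fin (d+1) → ℝ), Disjoint X Y →
      Disjoint (P.filter (fun x => maLift d x ∈ X)) (P.filter (fun x => maLift d x ∈ Y)) := by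
    intro X Y h
    rw [Finset.disjoint_left] at h ⊢
    intro x hx hx'
    exact h (Finset.mem_filter.1 hx).2 (Finset.mem_filter.1 hx').2
  have hcard : ∀ X : Finset (Fin (d+1) → ℝ), X ⊆ P.image (maLift d) → m ≤ X.card →
      m ≤ (P.filter (fun x => maLift d x ∈ X)).card := by
    intro X hX hXm
    refine hXm.trans ?_
    refine (Finset.card_le_card (?_ : X ⊆ (P.filter (fun x => maLift d x ∈ X)).image (maLift d))).trans
      Finset.card_image_le
    intro z hz
    obtain ⟨x, hx, rfl⟩ := Finset.mem_image.1 (hX hz)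
    exact Finset.mem_image_of_mem _ (Finset.mem_filter.2 ⟨hx, hz⟩)
  refine ⟨fun i => P.filter (fun x => maLift d x ∈ A i), fun i => P.filter (fun x => maLift d x ∈ B i),
    fun i => Finset.filter_subset _ _, fun i => Finset.filter_subset _ _,
    fun i j h => hdisj _ _ (hAA i j h), fun i j h => hdisj _ _ (hBB i j h),
    fun i j => hdisj _ _ (hAB i j), fun i => hreal _ (hcard _ (hA i) (hAm i)),
    fun i => hreal _ (hcard _ (hB i) (hBm i)), ?_⟩
  intro a b ha hb
  have H := hav (fun i => maLift d (a i)) (fun i => maLift d (b i))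
    (fun i => (Finset.mem_filter.1 (ha i)).2) (fun i => (Finset.mem_filter.1 (hb i)).2)
  exact ⟨ma_avoidsD a b (fun e he => (H e he).1), ma_avoidsD b a (fun e he => (H e he).2)⟩

end MAHelpers

/-- Positive fraction mutually avoiding sets theorem in `ℝ^d`. -/
theorem fractional_mutually_avoiding_higher_dim (d : ℕ) (hd : 3 ≤ d) :
    ∃ c : ℝ, 0 < c ∧
      ∀ k : ℕ, 2 ≤ k → ∃ n₀ : ℕ,
        ∀ (P : Finset (EuclideanSpace ℝ (Fin d))) (n : ℕ), P.card = n → n₀ ≤ n →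
          GenPosD d (P : Set (EuclideanSpace ℝ (Fin d))) →
          ∃ A B : Fin k → Finset (EuclideanSpace ℝ (Fin d)),
            (∀ i, A i ⊆ P) ∧ (∀ i, B i ⊆ P) ∧
            (∀ i j, i ≠ j → Disjoint (A i) (A j)) ∧
            (∀ i j, i ≠ j → Disjoint (B i) (B j)) ∧
            (∀ i j, Disjoint (A i) (B j)) ∧
            (∀ i, (n : ℝ) / (k : ℝ) ^ c ≤ (A i).card) ∧
            (∀ i, (n : ℝ) / (k : ℝ) ^ c ≤ (B i).card) ∧
            (∀ a b : Fin k → EuclideanSpace ℝ (Fin d),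
              (∀ i, a i ∈ A i) → (∀ i, b i ∈ B i) →
              MutuallyAvoidingD d (Set.range a) (Set.range b)) := by
  exact ma_final d (by omega)
end
end

section
/- Let d ≥ 1 and k ≥ d be integers, and let (p₁, …, p_{2k}) and (q₁, …, q_{2k}) be two sequences of points in ℝ^d, each in general position, having the same order type (i.e., for every choice of indices i₁ < i₂ < ⋯ < i_{d+1}, the orientation of (p_{i₁}, …, p_{i_{d+1}}) equals the orientation of (q_{i₁}, …, q_{i_{d+1}})). If the sets {p₁, …, p_k} and {p_{k+1}, …, p_{2k}} are mutually avoiding, then the sets {q₁, …, q_k} and {q_{k+1}, …, q_{2k}} are mutually avoiding. -/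
noncomputable section

/-- The orientation of an ordered `(d+1)`-tuple of points in `ℝ^d`: the sign of the
determinant of the `(d+1) × (d+1)` matrix whose columns are `(1, qᵢ)`. -/
noncomputable def orientation (d : ℕ) (q : Fin (d + 1) → EuclideanSpace ℝ (Fin d)) : ℝ :=
  Real.sign (Matrix.det (Matrix.of fun i j => (Fin.cons (1 : ℝ) (fun t : Fin d => q j t) : Fin (d + 1) → ℝ) i))

/-- A point sequence in `ℝ^d` is in general position if no `d+1` of its points lie on a
common hyperplane, i.e. any `d+1` of its points are affinely independent. -/
def GenPosSeq (d n : ℕ) (p : Fin n → EuclideanSpace ℝ (Fin d)) : Prop :=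
  ∀ f : Fin (d + 1) → Fin n, Function.Injective f → AffineIndependent ℝ (p ∘ f)

/-- The tuple of subsets `(A 0, …, A (k-1))` of the point sequence `p` has same-type
transversals: any two transversals have the same order type, i.e. the orientations of
corresponding `(d+1)`-subtuples agree. -/
def SameTypeTransversals (d k n : ℕ) (p : Fin n → EuclideanSpace ℝ (Fin d))
    (A : Fin k → Finset (Fin n)) : Prop :=
  ∀ t t' : Fin k → Fin n, (∀ i, t i ∈ A i) → (∀ i, t' i ∈ A i) →
    ∀ f : Fin (d + 1) → Fin k, StrictMono f →
      orientation d (fun j => p (t (f j))) = orientation d (fun j => p (t' (f j)))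

/-- The orientation determinant. -/
def oDet (d : ℕ) (q : Fin (d + 1) → EuclideanSpace ℝ (Fin d)) : ℝ :=
  Matrix.det (Matrix.of fun i j => (Fin.cons (1 : ℝ) (fun t : Fin d => q j t) : Fin (d + 1) → ℝ) i)

lemma oDet_ne_zero {d : ℕ} {q : Fin (d + 1) → EuclideanSpace ℝ (Fin d)}
    (h : AffineIndependent ℝ q) : oDet d q ≠ 0 := by
  intro h0
  obtain ⟨v, hv, hv0⟩ := Matrix.exists_mulVec_eq_zero_iff.mpr h0
  rw [affineIndependent_iff] at h
  apply hv
  have h1 : ∑ j, v j = 0 := by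
    have := congrFun hv0 0
    simpa [Matrix.mulVec, dotProduct] using this
  have h2 : ∑ j, v j • q j = 0 := by
    ext t
    have := congrFun hv0 t.succ
    simp only [Matrix.mulVec, dotProduct, Matrix.of_apply, Fin.cons_succ, Pi.zero_apply] at this
    simp only [WithLp.ofLp_sum, Finset.sum_apply, PiLp.smul_apply, smul_eq_mul, PiLp.zero_apply]
    rw [← this]
    exact Finset.sum_congr rfl fun _ _ => mul_comm _ _
  funext j
  exact h Finset.univ v h1 h2 j (Finset.mem_univ _)

lemma oDet_perm {d : ℕ} (q : Fin (d + 1) → EuclideanSpace ℝ (Fin d))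
    (σ : Equiv.Perm (Fin (d + 1))) :
    oDet d (q ∘ σ) = ((Equiv.Perm.sign σ : ℤ) : ℝ) * oDet d q := by
  unfold oDet
  rw [← Matrix.det_permute']
  rfl

lemma oDet_affine {d : ℕ} (a : Fin d → EuclideanSpace ℝ (Fin d)) :
    ∃ F : EuclideanSpace ℝ (Fin d) →ᵃ[ℝ] ℝ, ∀ z, F z = oDet d (Fin.cons z a) := by
  have : ∃ c : Fin (d + 1) → ℝ, ∀ z : EuclideanSpace ℝ (Fin d),
      oDet d (Fin.cons z a) = c 0 + ∑ t : Fin d, c t.succ * z t := by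
    refine ⟨fun i => (-1) ^ (i : ℕ) * Matrix.det ((Matrix.of fun i j =>
      (Fin.cons (1 : ℝ) (fun t : Fin d => a j t) : Fin (d + 1) → ℝ) i).submatrix
        i.succAbove id), fun z => ?_⟩
    unfold oDet
    rw [Matrix.det_succ_column_zero, Fin.sum_univ_succ]
    congr 1
    · simp
      rfl
    · refine Finset.sum_congr rfl fun t _ => ?_
      simp only [Matrix.of_apply, Fin.cons_succ, Fin.cons_zero]
      rw [mul_right_comm]
      rfl
  obtain ⟨c, hc⟩ := this
  let L : EuclideanSpace ℝ (Fin d) →ₗ[ℝ] ℝ :=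
    { toFun := fun z => ∑ t : Fin d, c t.succ * z t
      map_add' := by intro x y; simp [mul_add, Finset.sum_add_distrib]
      map_smul' := by intro r x; simp [Finset.mul_sum, mul_left_comm] }
  refine ⟨AffineMap.const ℝ _ (c 0) + L.toAffineMap, fun z => ?_⟩
  rw [hc]
  rfl

lemma oDet_cons_self {d : ℕ} (a : Fin d → EuclideanSpace ℝ (Fin d)) (i : Fin d) :
    oDet d (Fin.cons (a i) a) = 0 := by
  unfold oDet
  apply Matrix.det_zero_of_column_eq (i := 0) (j := i.succ) (Fin.succ_ne_zero i).symm
  intro k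
  simp

lemma cons_comp' {d n : ℕ} (p : Fin n → EuclideanSpace ℝ (Fin d)) (x : Fin n)
    (g : Fin d → Fin n) :
    p ∘ (Fin.cons x g : Fin (d + 1) → Fin n) = Fin.cons (p x) (p ∘ g) := by
  funext j
  refine Fin.cases ?_ (fun i => ?_) j <;> simp

lemma avoid_fwd {d n : ℕ} {p : Fin n → EuclideanSpace ℝ (Fin d)} (hp : GenPosSeq d n p)
    {I J : Set (Fin n)} (hIJ : Disjoint I J) (hav : AvoidsD d (p '' I) (p '' J))
    (g : Fin d → Fin n) (hg : Function.Injective g) (hgI : ∀ i, g i ∈ I)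
    (x y : Fin n) (hx : x ∈ J) (hy : y ∈ J) :
    0 < oDet d (p ∘ (Fin.cons x g : Fin (d + 1) → Fin n)) *
      oDet d (p ∘ (Fin.cons y g : Fin (d + 1) → Fin n)) := by
  have hinj : ∀ x ∈ J, Function.Injective (Fin.cons x g : Fin (d + 1) → Fin n) := by
    intro x hx
    rw [Fin.cons_injective_iff]
    refine ⟨?_, hg⟩
    rintro ⟨i, rfl⟩
    exact Set.disjoint_left.mp hIJ (hgI i) hx
  have hxa := hp _ (hinj x hx)
  have hx0 := oDet_ne_zero hxa
  have hy0 := oDet_ne_zero (hp _ (hinj y hy))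
  have hga : AffineIndependent ℝ (p ∘ g) := by
    have := hxa.comp_embedding (Fin.succEmb d)
    rw [cons_comp'] at this
    exact this
  obtain ⟨F, hF⟩ := oDet_affine (p ∘ g)
  rw [cons_comp', ← hF] at hx0 hy0
  rw [cons_comp', cons_comp', ← hF, ← hF]
  by_contra hneg
  have hlt : F (p x) * F (p y) < 0 := lt_of_le_of_ne (not_lt.mp hneg) (mul_ne_zero hx0 hy0)
  have hz : ∃ z ∈ convexHull ℝ (p '' J), F z = 0 := by
    have hc : Convex ℝ (F '' convexHull ℝ (p '' J)) := (convex_convexHull ℝ _).affine_image F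
    have mx : F (p x) ∈ F '' convexHull ℝ (p '' J) :=
      Set.mem_image_of_mem _ (subset_convexHull ℝ _ (Set.mem_image_of_mem _ hx))
    have my : F (p y) ∈ F '' convexHull ℝ (p '' J) :=
      Set.mem_image_of_mem _ (subset_convexHull ℝ _ (Set.mem_image_of_mem _ hy))
    have ho := hc.ordConnected
    rcases mul_neg_iff.mp hlt with ⟨h1, h2⟩ | ⟨h1, h2⟩
    · exact ho.out my mx ⟨h2.le, h1.le⟩
    · exact ho.out mx my ⟨h1.le, h2.le⟩
  obtain ⟨z, hzc, hz0⟩ := hz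
  classical
  have hs := hav (Finset.univ.image (p ∘ g))
    (by
      intro w hw
      simp only [Finset.coe_image, Finset.coe_univ, Set.image_univ, Set.mem_range] at hw
      obtain ⟨i, rfl⟩ := hw
      exact Set.mem_image_of_mem _ (hgI i))
    (by rw [Finset.card_image_of_injective _ hga.injective]; simp)
  refine Set.disjoint_left.mp hs ?_ hzc
  by_contra hns
  rw [hF] at hz0
  refine oDet_ne_zero ?_ hz0
  have himg : (Fin.cons z (p ∘ g) : Fin (d + 1) → EuclideanSpace ℝ (Fin d)) '' {x | x ≠ 0}
      = Set.range (p ∘ g) := by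
    ext w
    constructor
    · rintro ⟨j, hj, rfl⟩
      obtain ⟨i, rfl⟩ := Fin.exists_succ_eq.mpr hj
      exact ⟨i, by simp⟩
    · rintro ⟨i, rfl⟩
      exact ⟨i.succ, Fin.succ_ne_zero i, by simp⟩
  refine AffineIndependent.affineIndependent_of_notMem_span (i := 0) ?_ ?_
  · have := hga.comp_embedding (finSuccAboveEquiv (0 : Fin (d + 1))).symm.toEmbedding
    refine (congrArg (AffineIndependent ℝ) ?_).mpr this
    funext ⟨j, hj⟩
    obtain ⟨i, rfl⟩ := Fin.exists_succ_eq.mpr hj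
    have h2 : (finSuccAboveEquiv (0 : Fin (d + 1))).symm ⟨i.succ, hj⟩ = i := by
      rw [Equiv.symm_apply_eq]
      ext
      simp [finSuccAboveEquiv_apply]
    simp [h2]
  · rw [himg]
    simpa [Function.comp_def] using hns

lemma avoid_bwd {d n : ℕ} {p : Fin n → EuclideanSpace ℝ (Fin d)}
    {I J : Set (Fin n)}
    (h : ∀ g : Fin d → Fin n, Function.Injective g → (∀ i, g i ∈ I) →
      ∀ x y : Fin n, x ∈ J → y ∈ J →
      0 < oDet d (p ∘ (Fin.cons x g : Fin (d + 1) → Fin n)) *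
      oDet d (p ∘ (Fin.cons y g : Fin (d + 1) → Fin n))) : AvoidsD d (p '' I) (p '' J) := by
  intro s hs hcard
  rw [Set.disjoint_left]
  intro z hz hzc
  let e := s.equivFinOfCardEq hcard
  have hg' : ∀ i : Fin d, ∃ j ∈ I, p j = e.symm i := fun i => hs (e.symm i).2
  choose g hgI hg using hg'
  have hginj : Function.Injective g := by
    intro i j hij
    apply e.symm.injective
    apply Subtype.ext
    rw [← hg, ← hg, hij]
  have h' := h g hginj hgI
  obtain ⟨F, hF⟩ := oDet_affine (p ∘ g)
  simp only [cons_comp', ← hF] at h'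
  have hz0 : F z = 0 := by
    have : affineSpan ℝ (s : Set (EuclideanSpace ℝ (Fin d))) ≤
        (affineSpan ℝ {(0 : ℝ)}).comap F := by
      rw [affineSpan_le]
      intro w hw
      have : F w = 0 := by
        have hw' : (p ∘ g) (e ⟨w, hw⟩) = w := by simp [hg]
        rw [hF, ← hw']
        exact oDet_cons_self _ _
      simp [this]
    simpa using this hz
  have hne : (p '' J).Nonempty := by
    rw [← convexHull_nonempty_iff (𝕜 := ℝ)]
    exact ⟨z, hzc⟩
  obtain ⟨_, x, hx, rfl⟩ := hne
  have hx1 := h' x x hx hx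
  have hcv : Convex ℝ (F ⁻¹' {r : ℝ | 0 < F (p x) * r}) := by
    apply Convex.affine_preimage
    intro a ha b hb s t hs ht hst
    simp only [Set.mem_setOf_eq, smul_eq_mul] at *
    have e1 : F (p x) * (s * a + t * b) = s * (F (p x) * a) + t * (F (p x) * b) := by ring
    rw [e1]
    rcases hs.eq_or_lt with rfl | hs'
    · have : t = 1 := by linarith
      subst this; simpa using hb
    · have := mul_pos hs' ha
      have := mul_nonneg ht hb.le
      linarith
  have := convexHull_min (s := p '' J) (by
    rintro _ ⟨y, hy, rfl⟩
    exact h' x y hx hy) hcv hzc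
  simp [hz0] at this

lemma same_sign {d n : ℕ} {p q : Fin n → EuclideanSpace ℝ (Fin d)}
    (hp : GenPosSeq d n p) (hq : GenPosSeq d n q)
    (hot : ∀ f : Fin (d + 1) → Fin n, StrictMono f →
      orientation d (p ∘ f) = orientation d (q ∘ f))
    (f : Fin (d + 1) → Fin n) (hf : Function.Injective f) :
    0 < oDet d (p ∘ f) * oDet d (q ∘ f) := by
  have hm : StrictMono (f ∘ Tuple.sort f) :=
    (Tuple.monotone_sort f).strictMono_of_injective (hf.comp (Tuple.sort f).injective)
  have h1 : Real.sign (oDet d ((p ∘ f) ∘ Tuple.sort f)) =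
    Real.sign (oDet d ((q ∘ f) ∘ Tuple.sort f)) := hot _ hm
  have hp0 := oDet_ne_zero (hp _ hm.injective)
  have hq0 := oDet_ne_zero (hq _ hm.injective)
  change oDet d ((p ∘ f) ∘ Tuple.sort f) ≠ 0 at hp0
  change oDet d ((q ∘ f) ∘ Tuple.sort f) ≠ 0 at hq0
  have h2 : 0 < oDet d ((p ∘ f) ∘ Tuple.sort f) * oDet d ((q ∘ f) ∘ Tuple.sort f) := by
    rcases lt_or_gt_of_ne hp0 with a | a <;> rcases lt_or_gt_of_ne hq0 with b | b
    · exact mul_pos_of_neg_of_neg a b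
    · rw [Real.sign_of_neg a, Real.sign_of_pos b] at h1; norm_num at h1
    · rw [Real.sign_of_pos a, Real.sign_of_neg b] at h1; norm_num at h1
    · exact mul_pos a b
  rw [oDet_perm, oDet_perm] at h2
  rcases Int.units_eq_one_or (Equiv.Perm.sign (Tuple.sort f)) with e | e <;> rw [e] at h2 <;>
    simpa using h2

lemma avoid_transfer {d n : ℕ} {p q : Fin n → EuclideanSpace ℝ (Fin d)}
    (hp : GenPosSeq d n p) (hq : GenPosSeq d n q)
    (hot : ∀ f : Fin (d + 1) → Fin n, StrictMono f →
      orientation d (p ∘ f) = orientation d (q ∘ f))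
    {I J : Set (Fin n)} (hIJ : Disjoint I J) (hav : AvoidsD d (p '' I) (p '' J)) :
    AvoidsD d (q '' I) (q '' J) := by
  apply avoid_bwd
  intro g hg hgI x y hx hy
  have hinj : ∀ x ∈ J, Function.Injective (Fin.cons x g : Fin (d + 1) → Fin n) := by
    intro x hx
    rw [Fin.cons_injective_iff]
    refine ⟨?_, hg⟩
    rintro ⟨i, rfl⟩
    exact Set.disjoint_left.mp hIJ (hgI i) hx
  have h0 := avoid_fwd hp hIJ hav g hg hgI x y hx hy
  have h1 := same_sign hp hq hot _ (hinj x hx)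
  have h2 := same_sign hp hq hot _ (hinj y hy)
  have h3 := mul_pos h1 h2
  rw [mul_mul_mul_comm] at h3
  exact (pos_iff_pos_of_mul_pos h3).mp h0

/-- Being mutually avoiding depends only on the order type: if two sequences of `2k`
points in general position in `ℝ^d` have the same order type and the first and second
halves of the first sequence are mutually avoiding, then so are the first and second
halves of the second sequence. -/
theorem mutually_avoiding_order_type_invariant (d k : ℕ) (hd : 1 ≤ d) (hk : d ≤ k)
    (p q : Fin (2 * k) → EuclideanSpace ℝ (Fin d))
    (hp : GenPosSeq d (2 * k) p) (hq : GenPosSeq d (2 * k) q)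
    (hot : ∀ f : Fin (d + 1) → Fin (2 * k), StrictMono f →
      orientation d (p ∘ f) = orientation d (q ∘ f))
    (hav : MutuallyAvoidingD d (p '' {i : Fin (2 * k) | (i : ℕ) < k})
      (p '' {i : Fin (2 * k) | k ≤ (i : ℕ)})) :
    MutuallyAvoidingD d (q '' {i : Fin (2 * k) | (i : ℕ) < k})
      (q '' {i : Fin (2 * k) | k ≤ (i : ℕ)}) := by
  have hdj : Disjoint {i : Fin (2 * k) | (i : ℕ) < k} {i : Fin (2 * k) | k ≤ (i : ℕ)} := by
    rw [Set.disjoint_left]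
    intro i hi hi2
    exact absurd (show (i : ℕ) < k from hi) (not_lt.mpr hi2)
  exact ⟨avoid_transfer hp hq hot hdj hav.1, avoid_transfer hp hq hot hdj.symm hav.2⟩
end
end
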